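/- arXiv:2111.14981 — 5 statements merged into one kernel-verified Lean document; each statement's English description precedes it below -/
import Mathlib

section
/- Let d ≥ 1 and let φ : ℕ → (0,∞) be a positive increasing function with ∑_{n=1}^∞ 1/φ(n) < ∞. Then for Lebesgue-almost every α = (α₁,…,α_d) ∈ ℝ^d, the series ∑_{n=2}^∞ 1 / [ n·φ(log n)·∏_{i=1}^d ( ‖nα_i‖·φ(|log ‖nα_i‖|) ) ] converges. -/
open MeasureTheory Finset

noncomputable section

/-- Distance from `y` to the nearest integer. -/
def nid (y : ℝ) : ℝ := |y - round y|

/-!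
The series depends on `α` only modulo `ℤ ^ d`, and `α ↦ n • α` preserves Haar measure on the
torus. So the `L¹` norm over the torus of the `n`-th term is a constant times `1 / (n φ(log n))`,
and it suffices that `1 / (‖y‖ φ(|log ‖y‖|))` is integrable on the circle and that
`∑ 1 / (n φ(log n))` converges. Both follow by cutting into the pieces where the argument of `φ`
rounds up to `k`: each piece contributes `O(1 / φ(k))`.
-/

theorem inv_le_exp_ceil_abs_log {t : ℝ} (ht : 0 ≤ t) : t⁻¹ ≤ Real.exp ⌈|Real.log t|⌉₊ := by
  rcases ht.eq_or_lt with rfl | ht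
  · simp
  rw [← Real.log_le_iff_le_exp (inv_pos.2 ht), Real.log_inv]
  exact (neg_le_abs _).trans (Nat.le_ceil _)

theorem le_exp_one_sub_ceil_abs_log {t : ℝ} (ht : 0 ≤ t) (ht1 : t ≤ 1) :
    t ≤ Real.exp (1 - ⌈|Real.log t|⌉₊) := by
  rcases ht.eq_or_lt with rfl | ht
  · positivity
  rw [← Real.log_le_iff_le_exp ht]
  linarith [Nat.ceil_lt_add_one (abs_nonneg (Real.log t)),
    abs_of_nonpos (Real.log_nonpos ht.le ht1)]

theorem natCast_le_exp_ceil_log (n : ℕ) : (n : ℝ) ≤ Real.exp ⌈Real.log n⌉₊ := by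
  rcases n.eq_zero_or_pos with rfl | hn
  · simp
  exact (Real.log_le_iff_le_exp (Nat.cast_pos.2 hn)).1 (Nat.le_ceil _)

theorem inv_natCast_le_exp_one_sub_ceil_log (n : ℕ) :
    (n : ℝ)⁻¹ ≤ Real.exp (1 - ⌈Real.log n⌉₊) := by
  have h := le_exp_one_sub_ceil_abs_log (inv_nonneg.2 n.cast_nonneg) n.cast_inv_le_one
  rwa [Real.log_inv, abs_neg, abs_of_nonneg (Real.log_natCast_nonneg n)] at h

section Levels

variable {X : Type*} [MeasurableSpace X] {μ : Measure X}

theorem integrable_comp_mul_of_norm_le_comp {κ : Type*} [Countable κ] [MeasurableSpace κ]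
    [MeasurableSingletonClass κ] {ψ B : κ → ℝ} (hψ : Summable ψ) {l : X → κ} (hl : Measurable l)
    {f : X → ℝ} (hf : AEStronglyMeasurable f μ) (hfB : ∀ x, ‖f x‖ ≤ B (l x)) {C : ℝ}
    (hC : ∀ k, ENNReal.ofReal (B k) * μ (l ⁻¹' {k}) ≤ ENNReal.ofReal C) :
    Integrable (fun x ↦ ψ (l x) * f x) μ := by
  refine ⟨((measurable_of_countable ψ).comp hl).aestronglyMeasurable.mul hf, ?_⟩
  calc ∫⁻ x, ‖ψ (l x) * f x‖ₑ ∂μ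
      ≤ ∫⁻ x, ‖ψ (l x)‖ₑ * ENNReal.ofReal (B (l x)) ∂μ := by
        refine lintegral_mono fun x ↦ ?_
        rw [enorm_mul, ← ofReal_norm (f x)]
        gcongr
        exact hfB x
    _ = ∑' k, ‖ψ k‖ₑ * (ENNReal.ofReal (B k) * μ (l ⁻¹' {k})) := by
        rw [← lintegral_map (measurable_of_countable fun k ↦ ‖ψ k‖ₑ * ENNReal.ofReal (B k)) hl,
          lintegral_countable']
        simp only [Measure.map_apply hl (measurableSet_singleton _), mul_assoc]
    _ ≤ ∑' k, ‖ψ k‖ₑ * ENNReal.ofReal C := by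
        gcongr with k
        exact hC k
    _ < ⊤ := by
        rw [ENNReal.tsum_mul_right]
        exact ENNReal.mul_lt_top (tsum_enorm_ne_top_iff_summable_norm.2 hψ.norm).lt_top
          ENNReal.ofReal_lt_top

theorem integrable_ceil_abs_log_div_of_measure_sublevel_le {ψ : ℕ → ℝ} (hψ : Summable ψ)
    {f : X → ℝ} (hf : Measurable f) (hf0 : ∀ x, 0 ≤ f x) (hf1 : ∀ x, f x ≤ 1) {C : ℝ}
    (hC : ∀ r, 0 < r → μ {x | f x ≤ r} ≤ ENNReal.ofReal (C * r)) :
    Integrable (fun x ↦ ψ ⌈|Real.log (f x)|⌉₊ / f x) μ := by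
  have hl : Measurable fun x ↦ ⌈|Real.log (f x)|⌉₊ := Nat.measurable_ceil.comp hf.log.abs
  simp only [div_eq_mul_inv]
  refine integrable_comp_mul_of_norm_le_comp hψ hl hf.inv.aestronglyMeasurable
    (B := fun k : ℕ ↦ Real.exp k) (C := C * Real.exp 1) (fun x ↦ ?_) fun k ↦ ?_
  · rw [Real.norm_of_nonneg (inv_nonneg.2 (hf0 x))]
    exact inv_le_exp_ceil_abs_log (hf0 x)
  · have hsub : (fun x ↦ ⌈|Real.log (f x)|⌉₊) ⁻¹' {k} ⊆ {x | f x ≤ Real.exp (1 - k)} := by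
      rintro x rfl
      exact le_exp_one_sub_ceil_abs_log (hf0 x) (hf1 x)
    calc ENNReal.ofReal (Real.exp k) * μ ((fun x ↦ ⌈|Real.log (f x)|⌉₊) ⁻¹' {k})
        ≤ ENNReal.ofReal (Real.exp k) * ENNReal.ofReal (C * Real.exp (1 - k)) := by
          gcongr
          exact (measure_mono hsub).trans (hC _ (Real.exp_pos _))
      _ = ENNReal.ofReal (C * Real.exp 1) := by
          rw [← ENNReal.ofReal_mul (Real.exp_pos _).le, mul_left_comm, ← Real.exp_add,
            add_sub_cancel]

end Levels

theorem integrable_ceil_abs_log_norm_div_norm {ψ : ℕ → ℝ} (hψ : Summable ψ) :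
    Integrable fun y : UnitAddCircle ↦ ψ ⌈|Real.log ‖y‖|⌉₊ / ‖y‖ := by
  refine integrable_ceil_abs_log_div_of_measure_sublevel_le hψ measurable_norm norm_nonneg
    (fun y ↦ ?_) (C := 2) fun r _ ↦ ?_
  · exact (AddCircle.norm_le_half_period 1 one_ne_zero).trans (by norm_num)
  · have hball : {y : UnitAddCircle | ‖y‖ ≤ r} = Metric.closedBall 0 r := by ext; simp
    rw [hball, AddCircle.volume_closedBall]
    exact ENNReal.ofReal_le_ofReal (min_le_right _ _)

theorem summable_ceil_log_natCast_div_natCast {ψ : ℕ → ℝ} (hψ : Summable ψ) :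
    Summable fun n : ℕ ↦ ψ ⌈Real.log n⌉₊ / n := by
  suffices h : Integrable (fun n : ℕ ↦ ψ ⌈Real.log n⌉₊ * (n : ℝ)⁻¹) Measure.count by
    simpa only [div_eq_mul_inv] using (integrable_count_iff.1 h).of_norm
  refine integrable_comp_mul_of_norm_le_comp hψ (measurable_of_countable _)
    (measurable_of_countable _).aestronglyMeasurable
    (B := fun k : ℕ ↦ Real.exp (1 - k)) (C := 2 * Real.exp 1) (fun n ↦ ?_) fun k ↦ ?_
  · rw [Real.norm_of_nonneg (inv_nonneg.2 n.cast_nonneg)]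
    exact inv_natCast_le_exp_one_sub_ceil_log n
  · have hsub : (fun n : ℕ ↦ ⌈Real.log n⌉₊) ⁻¹' {k} ⊆ Iic ⌊Real.exp k⌋₊ := by
      rintro n rfl
      simpa using Nat.le_floor (natCast_le_exp_ceil_log n)
    have hcard : (#(Iic ⌊Real.exp k⌋₊) : ℝ) ≤ 2 * Real.exp k := by
      rw [Nat.card_Iic]
      push_cast
      linarith [Nat.floor_le (Real.exp_pos k).le, Real.one_le_exp (Nat.cast_nonneg (α := ℝ) k)]
    calc ENNReal.ofReal (Real.exp (1 - k)) * Measure.count ((fun n : ℕ ↦ ⌈Real.log n⌉₊) ⁻¹' {k})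
        ≤ ENNReal.ofReal (Real.exp (1 - k)) * ENNReal.ofReal (2 * Real.exp k) := by
          gcongr
          refine (measure_mono hsub).trans ?_
          rw [Measure.count_apply_finset, ← ENNReal.ofReal_natCast]
          exact ENNReal.ofReal_le_ofReal hcard
      _ = ENNReal.ofReal (2 * Real.exp 1) := by
          rw [← ENNReal.ofReal_mul (Real.exp_pos _).le, mul_left_comm, ← Real.exp_add,
            sub_add_cancel]

theorem ae_summable_norm_smul_comp_measurePreserving {X Y κ 𝕜 E : Type*} [Countable κ]
    [MeasurableSpace X] [MeasurableSpace Y] {μ : Measure X} {ν : Measure Y} [NormedField 𝕜]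
    [NormedAddCommGroup E] [NormedSpace 𝕜 E] {c : κ → 𝕜} (hc : Summable (‖c ·‖)) {p : ENNReal}
    (hp : 1 ≤ p) {g : Y → E} (hg : MemLp g p ν) {T : κ → X → Y}
    (hT : ∀ k, MeasurePreserving (T k) μ ν) :
    ∀ᵐ x ∂μ, Summable fun k ↦ ‖c k • g (T k x)‖ := by
  have hgT : ∀ k, MemLp (g ∘ T k) p μ := fun k ↦ hg.comp_measurePreserving (hT k)
  refine summable_norm_of_tsum_eLpNorm_ne_top (f := fun k ↦ c k • g ∘ T k) hp
    (fun k ↦ (hgT k).1.const_smul (c k)) ?_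
  simp only [eLpNorm_const_smul, eLpNorm_comp_measurePreserving hg.1 (hT _), ENNReal.tsum_mul_right]
  exact ENNReal.mul_ne_top (tsum_enorm_ne_top_iff_summable_norm.2 hc) hg.eLpNorm_ne_top

theorem quasiMeasurePreserving_pi_coe_addCircle (ι : Type*) [Fintype ι] (T : ℝ)
    [hT : Fact (0 < T)] :
    Measure.QuasiMeasurePreserving (fun (x : ι → ℝ) i ↦ (x i : AddCircle T)) := by
  have hmeas : Measurable fun (x : ι → ℝ) i ↦ (x i : AddCircle T) :=
    measurable_pi_lambda _ fun i ↦ AddCircle.measurable_mk'.comp (measurable_pi_apply i)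
  let cube (a : ι → ℤ) : Set (ι → ℝ) := Set.univ.pi fun i ↦ Set.Ioc (a i • T) ((a i + 1) • T)
  have hcover : ⋃ a, cube a = Set.univ := by
    rw [Set.iUnion_univ_pi fun _ (n : ℤ) ↦ Set.Ioc (n • T) ((n + 1) • T)]
    simp only [iUnion_Ioc_zsmul hT.out, Set.pi_univ]
  have hcube (a : ι → ℤ) :
      MeasurePreserving (fun x i ↦ (x i : AddCircle T)) (volume.restrict (cube a)) := by
    rw [volume_pi, Measure.restrict_pi_pi]
    refine measurePreserving_pi _ _ fun i ↦ ?_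
    rw [add_smul, one_smul]
    exact AddCircle.measurePreserving_mk T (a i • T)
  refine ⟨hmeas, Measure.AbsolutelyContinuous.mk fun s hs hs0 ↦ ?_⟩
  rw [Measure.map_apply hmeas hs, ← Measure.restrict_univ (μ := volume), ← hcover,
    measure_eq_zero_iff_ae_notMem, ae_restrict_iUnion_iff]
  exact fun a ↦ (hcube a).quasiMeasurePreserving.ae (measure_eq_zero_iff_ae_notMem.1 hs0)

theorem nid_eq_norm_coe_unitAddCircle (x : ℝ) : nid x = ‖(x : UnitAddCircle)‖ := by
  rw [UnitAddCircle.norm_eq, nid]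

-- `ψ` and `χ i` play the role of `1 / φ`.
theorem stmt_7_general {ι : Type*} [Fintype ι] {ψ : ℕ → ℝ} {χ : ι → ℕ → ℝ} (hψ : Summable ψ)
    (hχ : ∀ i, Summable (χ i)) :
    ∀ᵐ α : ι → ℝ, Summable fun n : {m : ℕ // 2 ≤ m} ↦
      ψ ⌈Real.log n.1⌉₊ / n.1 *
        ∏ i, χ i ⌈|Real.log (nid (n.1 * α i))|⌉₊ / nid (n.1 * α i) := by
  have hc : Summable fun n : {m : ℕ // 2 ≤ m} ↦ ‖ψ ⌈Real.log n.1⌉₊ / n.1‖ :=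
    ((summable_ceil_log_natCast_div_natCast hψ).comp_injective Subtype.val_injective).norm
  have hg := Integrable.fintype_prod fun i ↦ integrable_ceil_abs_log_norm_div_norm (hχ i)
  have hT : ∀ n : {m : ℕ // 2 ≤ m}, MeasurePreserving fun y : UnitAddTorus ι ↦ n.1 • y := fun n ↦ by
    simpa using Measure.measurePreserving_zsmul (volume : Measure (UnitAddTorus ι)) (n := n.1)
      (by have := n.2; omega)
  filter_upwards [(quasiMeasurePreserving_pi_coe_addCircle ι 1).ae
    (ae_summable_norm_smul_comp_measurePreserving hc le_rfl (memLp_one_iff_integrable.2 hg) hT)]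
    with α hα
  simpa [nid_eq_norm_coe_unitAddCircle, ← nsmul_eq_mul] using hα.of_norm

/-- For a positive increasing `φ` with `∑ 1/φ(n) < ∞`, for a.e. `α ∈ ℝ^d` the series
`∑_{n=2}^∞ 1/(n·φ(log n)·∏_{i=1}^d (‖nα_i‖·φ(|log ‖nα_i‖|)))` converges. -/
theorem stmt_7 (d : ℕ) (hd : 1 ≤ d) (φ : ℕ → ℝ) (hφpos : ∀ n, 0 < φ n)
    (hφmono : Monotone φ) (hφsum : Summable fun n => 1 / φ n) :
    ∀ᵐ α ∂(volume : Measure (Fin d → ℝ)),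
      Summable fun n : {m : ℕ // 2 ≤ m} =>
        1 / ((n.1 : ℝ) * φ (Nat.ceil (Real.log (n.1 : ℝ))) *
          ∏ i : Fin d,
            (nid ((n.1 : ℝ) * α i) *
              φ (Nat.ceil |Real.log (nid ((n.1 : ℝ) * α i))|))) := by
  filter_upwards [stmt_7_general hφsum fun _ : Fin d ↦ hφsum] with α hα
  exact hα.congr fun n ↦ by simp [prod_mul_distrib, div_eq_mul_inv, mul_comm]
end
end

section
/- Let d ≥ 1 and let φ : ℕ → (0,∞) be a positive increasing function with ∑_{n=1}^∞ 1/φ(n) < ∞. For Lebesgue-almost every α = (α₁,…,α_d) ∈ ℝ^d and every index 1 ≤ j ≤ d there is a constant C(α,φ,j) such that for all N ≥ 3, ∑_{n=1}^{⌊N²(log N)²⌋} 1 / ( n·∏_{1≤i≤d, i≠j} ‖nα_i‖ ) ≤ C(α,φ,j)·(log N)^d·φ(log log N)^d. -/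
open MeasureTheory Finset

noncomputable section

/-! Truncate `1 / ‖nαᵢ‖` at height `2n²`. By Borel–Cantelli, for almost every `α` only finitely
many `n` are affected. Since multiplication by `n` preserves Haar measure on the circle, the
truncated sum up to `x` has mean `O((1 + log x) ^ d)`. Along `x_t = exp (4 exp t)`, where `log x_t`
is of order `exp t`, these means divided by `exp (t d) φ(t)` are summable, so almost surely the sum
up to `x_t` is `O(exp (t d) φ(t))` uniformly in `t`. Every `N` is handled by `t = ⌈log log N⌉`.
Summability of `1 / φ` bounds `φ` away from `0`, which absorbs both the finitely many exceptional
terms and the power of `φ`. -/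

lemma integral_prod_eval_eq_pow {ι X : Type*} [Fintype ι] [MeasurableSpace X] {μ : Measure X}
    [IsProbabilityMeasure μ] (f : X → ℝ) (s : Finset ι) :
    ∫ x, ∏ i ∈ s, f (x i) ∂Measure.pi (fun _ : ι => μ) = (∫ y, f y ∂μ) ^ #s := by
  classical
  calc ∫ x, ∏ i ∈ s, f (x i) ∂Measure.pi (fun _ : ι => μ)
      = ∫ x, ∏ i, (if i ∈ s then f else 1) (x i) ∂Measure.pi (fun _ : ι => μ) := by
        simp only [ite_apply, Pi.one_apply, Fintype.prod_ite_mem]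
    _ = ∏ i, if i ∈ s then ∫ y, f y ∂μ else 1 := by
        rw [integral_fintype_prod_eq_prod]
        refine Finset.prod_congr rfl fun i _ => ?_
        split_ifs <;> simp
    _ = (∫ y, f y ∂μ) ^ #s := by rw [Fintype.prod_ite_mem, Finset.prod_const]

lemma ae_exists_forall_norm_le_mul {ι X E : Type*} [Countable ι] [MeasurableSpace X]
    {μ : Measure X} [NormedAddCommGroup E] {f : ι → X → E} {b : ι → ℝ}
    (hf : ∀ t, Integrable (f t) μ) (hb : ∀ t, 0 < b t)
    (hsum : Summable fun t => (∫ x, ‖f t x‖ ∂μ) / b t) :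
    ∀ᵐ x ∂μ, ∃ B, 0 ≤ B ∧ ∀ t, ‖f t x‖ ≤ B * b t := by
  have hL1 (t : ι) : eLpNorm (fun x => ‖f t x‖ / b t) 1 μ =
      ENNReal.ofReal ((∫ x, ‖f t x‖ ∂μ) / b t) := by
    rw [eLpNorm_one_eq_lintegral_enorm,
      ← ofReal_integral_norm_eq_lintegral_enorm ((hf t).norm.div_const _), ← integral_div]
    simp only [norm_div, norm_norm, Real.norm_of_nonneg (hb t).le]
  filter_upwards [summable_norm_of_tsum_eLpNorm_ne_top le_rfl
    (fun t => ((hf t).norm.div_const (b t)).aestronglyMeasurable)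
    (by simpa only [hL1] using hsum.tsum_ofReal_ne_top)] with x hx
  refine ⟨∑' t, ‖‖f t x‖ / b t‖, tsum_nonneg fun _ => norm_nonneg _, fun t => ?_⟩
  rw [← div_le_iff₀ (hb t)]
  exact (le_abs_self _).trans (hx.le_tsum t fun _ _ => norm_nonneg _)

lemma exists_pos_forall_le_of_summable_one_div {ι : Type*} {φ : ι → ℝ} (hpos : ∀ t, 0 < φ t)
    (hsum : Summable fun t => 1 / φ t) : ∃ c, 0 < c ∧ ∀ t, c ≤ φ t := by
  have hnonneg (t : ι) : 0 ≤ 1 / φ t := one_div_nonneg.mpr (hpos t).le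
  have hS : 0 < 1 + ∑' t, 1 / φ t := by linarith [tsum_nonneg (L := .unconditional ι) hnonneg]
  refine ⟨1 / (1 + ∑' t, 1 / φ t), by positivity, fun t => ?_⟩
  rw [one_div_le hS (hpos t)]
  linarith [hsum.le_tsum t fun u _ => hnonneg u]

lemma exists_le_mul_pow_of_summable_one_div {κ : Type*} {φ : κ → ℝ} (hpos : ∀ t, 0 < φ t)
    (hsum : Summable fun t => 1 / φ t) {k : ℕ} (hk : k ≠ 0) :
    ∃ c, ∀ t, φ t ≤ c * φ t ^ k := by
  obtain ⟨c, hc, hcφ⟩ := exists_pos_forall_le_of_summable_one_div hpos hsum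
  refine ⟨1 / c ^ (k - 1), fun t => ?_⟩
  have hpow : c ^ (k - 1) ≤ φ t ^ (k - 1) := pow_le_pow_left₀ hc.le (hcφ t) _
  rw [one_div_mul_eq_div, le_div_iff₀ (by positivity), ← mul_pow_sub_one hk]
  exact mul_le_mul_of_nonneg_left hpow (hpos t).le

lemma exists_forall_sum_le_add_sum {κ : Type*} {f g : κ → ℝ}
    (h : ∀ᶠ n in Filter.cofinite, f n ≤ g n) :
    ∃ D, 0 ≤ D ∧ ∀ S : Finset κ, ∑ n ∈ S, f n ≤ D + ∑ n ∈ S, g n := by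
  have hsupp : (fun n => max (f n - g n) 0).HasFiniteSupport :=
    (Filter.eventually_cofinite.mp h).subset fun n hn hle =>
      hn (max_eq_right (sub_nonpos.mpr hle))
  have hnonneg (n : κ) : 0 ≤ max (f n - g n) 0 := le_max_right _ _
  refine ⟨∑' n, max (f n - g n) 0, tsum_nonneg hnonneg, fun S => ?_⟩
  rw [← sub_le_iff_le_add, ← Finset.sum_sub_distrib]
  exact (Finset.sum_le_sum fun n _ => le_max_left _ _).trans
    ((summable_of_hasFiniteSupport hsupp).sum_le_tsum S fun n _ => hnonneg n)

section TruncatedReciprocal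

variable {E : Type*} [SeminormedAddGroup E]

/-- The reciprocal of the norm, truncated at height `1 / ε`. It replaces `1 / ‖x‖`, which is not
integrable on the circle. -/
def truncInvNorm (ε : ℝ) (x : E) : ℝ := (max ‖x‖ ε)⁻¹

lemma truncInvNorm_nonneg (ε : ℝ) (x : E) : 0 ≤ truncInvNorm ε x :=
  inv_nonneg.mpr ((norm_nonneg x).trans (le_max_left _ _))

lemma truncInvNorm_of_le {ε : ℝ} {x : E} (h : ε ≤ ‖x‖) : truncInvNorm ε x = ‖x‖⁻¹ := by
  rw [truncInvNorm, max_eq_left h]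

lemma truncInvNorm_of_norm_le {ε : ℝ} {x : E} (h : ‖x‖ ≤ ε) : truncInvNorm ε x = ε⁻¹ := by
  rw [truncInvNorm, max_eq_right h]

lemma continuous_truncInvNorm {ε : ℝ} (hε : 0 < ε) :
    Continuous (truncInvNorm ε : E → ℝ) :=
  (continuous_norm.max continuous_const).inv₀ fun _ => (hε.trans_le (le_max_right _ _)).ne'

end TruncatedReciprocal

section Circle

lemma nid_natCast_mul (n : ℕ) (y : ℝ) : nid (n * y) = ‖n • (y : UnitAddCircle)‖ := by
  rw [nid, ← UnitAddCircle.norm_eq, ← nsmul_eq_mul, AddCircle.coe_nsmul]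

instance instIsProbabilityMeasureUnitAddCircle :
    IsProbabilityMeasure (volume : Measure UnitAddCircle) :=
  ⟨UnitAddCircle.measure_univ⟩

lemma intervalIntegral_truncInvNorm {ε a : ℝ} (hε : 0 < ε) (ha : ε ≤ a) :
    ∫ x in (0 : ℝ)..a, truncInvNorm ε x = 1 + Real.log (a / ε) := by
  have hint (u v : ℝ) : IntervalIntegrable (truncInvNorm ε) volume u v :=
    (continuous_truncInvNorm hε).intervalIntegrable u v
  have hflat : ∫ x in (0 : ℝ)..ε, truncInvNorm ε x = ∫ _ in (0 : ℝ)..ε, ε⁻¹ := by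
    refine intervalIntegral.integral_congr fun x hx => truncInvNorm_of_norm_le ?_
    rw [Set.uIcc_of_le hε.le] at hx
    rw [Real.norm_of_nonneg hx.1]
    exact hx.2
  have hinv : ∫ x in ε..a, truncInvNorm ε x = ∫ x in ε..a, x⁻¹ := by
    refine intervalIntegral.integral_congr fun x hx => ?_
    rw [Set.uIcc_of_le ha] at hx
    have hnorm : ‖x‖ = x := Real.norm_of_nonneg (hε.le.trans hx.1)
    simp only [truncInvNorm_of_le (hnorm.symm ▸ hx.1), hnorm]
  rw [← intervalIntegral.integral_add_adjacent_intervals (hint 0 ε) (hint ε a), hflat, hinv,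
    intervalIntegral.integral_const, integral_inv_of_pos hε (hε.trans_le ha), sub_zero,
    smul_eq_mul, mul_inv_cancel₀ hε.ne']

lemma integral_comp_norm_unitAddCircle {f : ℝ → ℝ} (hf : Continuous f) :
    ∫ θ : UnitAddCircle, f ‖θ‖ = 2 * ∫ x in (0 : ℝ)..1 / 2, f x := by
  have hint (u v : ℝ) : IntervalIntegrable (fun x => f |x|) volume u v :=
    (hf.comp continuous_abs).intervalIntegrable u v
  have hright : ∫ x in (0 : ℝ)..1 / 2, f |x| = ∫ x in (0 : ℝ)..1 / 2, f x := by
    refine intervalIntegral.integral_congr fun x hx => ?_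
    rw [Set.uIcc_of_le (by norm_num)] at hx
    simp only [abs_of_nonneg hx.1]
  have hleft : ∫ x in -(1 / 2 : ℝ)..0, f |x| = ∫ x in (0 : ℝ)..1 / 2, f |x| := by
    simpa using! (intervalIntegral.integral_comp_neg (a := 0) (b := 1 / 2) fun x => f |x|).symm
  calc ∫ θ : UnitAddCircle, f ‖θ‖
      = ∫ x in -(1 / 2 : ℝ)..1 / 2, f ‖(x : UnitAddCircle)‖ := by
        rw [← UnitAddCircle.intervalIntegral_preimage (-(1 / 2))]
        norm_num
    _ = ∫ x in -(1 / 2 : ℝ)..1 / 2, f |x| := by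
        refine intervalIntegral.integral_congr fun x hx => ?_
        rw [Set.uIcc_of_le (by norm_num)] at hx
        simp only [(AddCircle.norm_coe_eq_abs_iff 1 one_ne_zero).mpr
          (by simpa [abs_le] using hx)]
    _ = 2 * ∫ x in (0 : ℝ)..1 / 2, f x := by
        rw [← intervalIntegral.integral_add_adjacent_intervals (hint _ 0) (hint 0 _), hleft,
          hright, two_mul]

lemma integral_truncInvNorm_unitAddCircle {ε : ℝ} (hε : 0 < ε) (hε' : ε ≤ 1 / 2) :
    ∫ θ : UnitAddCircle, truncInvNorm ε θ = 2 * (1 + Real.log (1 / 2 / ε)) := by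
  rw [← intervalIntegral_truncInvNorm hε hε',
    ← integral_comp_norm_unitAddCircle (continuous_truncInvNorm hε)]
  simp only [truncInvNorm, norm_norm]

lemma measurePreserving_nsmul_unitAddCircle {n : ℕ} (hn : n ≠ 0) :
    MeasurePreserving fun θ : UnitAddCircle => n • θ := by
  simpa only [natCast_zsmul] using
    Measure.measurePreserving_zsmul (volume : Measure UnitAddCircle) (Int.natCast_ne_zero.mpr hn)

lemma ae_eventually_lt_norm_nsmul {ε : ℕ → ℝ} (hε : Summable ε) :
    ∀ᵐ θ : UnitAddCircle, ∀ᶠ n : ℕ in Filter.atTop, ε n < ‖n • θ‖ := by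
  have hvol (n : ℕ) : volume {θ : UnitAddCircle | ‖(n + 1) • θ‖ ≤ ε (n + 1)} ≤
      ENNReal.ofReal (2 * ε (n + 1)) := by
    have hball : {θ : UnitAddCircle | ‖(n + 1) • θ‖ ≤ ε (n + 1)} =
        (fun θ => (n + 1) • θ) ⁻¹' Metric.closedBall 0 (ε (n + 1)) := by
      ext θ
      simp
    rw [hball, (measurePreserving_nsmul_unitAddCircle n.succ_ne_zero).measure_preimage
      measurableSet_closedBall.nullMeasurableSet, AddCircle.volume_closedBall]
    exact ENNReal.ofReal_le_ofReal (min_le_right _ _)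
  have hsum : ∑' n, volume {θ : UnitAddCircle | ‖(n + 1) • θ‖ ≤ ε (n + 1)} ≠ ⊤ :=
    ne_top_of_le_ne_top
      (((summable_nat_add_iff 1).mpr hε).mul_left 2).tsum_ofReal_ne_top (ENNReal.tsum_le_tsum hvol)
  filter_upwards [ae_eventually_notMem hsum] with θ hθ
  rw [← Filter.map_add_atTop_eq_nat 1, Filter.eventually_map]
  simpa only [Set.mem_ofPred_eq, not_le] using hθ

end Circle

lemma ae_coe_of_ae_unitAddTorus {ι : Type*} [Fintype ι] {p : UnitAddTorus ι → Prop}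
    (hp : ∀ᵐ θ, p θ) : ∀ᵐ x : ι → ℝ, p fun i => (x i : UnitAddCircle) := by
  have hcover : ⋃ a : ι → ℤ, Set.univ.pi (fun i => Set.Ioc (a i : ℝ) (a i + 1)) = Set.univ := by
    refine Set.eq_univ_of_forall fun x => ?_
    have hx (i : ι) : ∃ n : ℤ, x i ∈ Set.Ioc (n : ℝ) (n + 1) := by
      rw [← Set.mem_iUnion, iUnion_Ioc_intCast]
      exact Set.mem_univ _
    choose a ha using hx
    exact Set.mem_iUnion.mpr ⟨a, fun i _ => ha i⟩
  rw [← Measure.restrict_univ (μ := (volume : Measure (ι → ℝ))), ← hcover,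
    ae_restrict_iUnion_iff]
  intro a
  rw [volume_pi, Measure.restrict_pi_pi]
  exact (measurePreserving_pi _ (fun _ => volume)
    fun i => UnitAddCircle.measurePreserving_mk (a i)).quasiMeasurePreserving.ae hp

section Sums

variable {ι E : Type*} [SeminormedAddGroup E]

/-- The sum of `1 / (n ∏ᵢ ‖n θᵢ‖)` over `1 ≤ n ≤ x`, with `i` ranging over `s`. -/
def reciprocalSum (s : Finset ι) (x : ℝ) (θ : ι → E) : ℝ :=
  ∑ n ∈ Icc 1 ⌊x⌋₊, 1 / (n * ∏ i ∈ s, ‖n • θ i‖)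

/-- The integrable variant of `reciprocalSum`, with `1 / ‖n θᵢ‖` truncated at height `2 n ^ 2`. -/
def truncReciprocalSum (s : Finset ι) (x : ℝ) (θ : ι → E) : ℝ :=
  ∑ n ∈ Icc 1 ⌊x⌋₊, 1 / n * ∏ i ∈ s, truncInvNorm (1 / (2 * n ^ 2)) (n • θ i)

lemma reciprocalSum_mono (s : Finset ι) (θ : ι → E) : Monotone fun x => reciprocalSum s x θ :=
  fun _ _ h => sum_le_sum_of_subset_of_nonneg (Icc_subset_Icc_right (Nat.floor_mono h))
    fun _ _ _ => by positivity

lemma truncReciprocalSum_nonneg (s : Finset ι) (x : ℝ) (θ : ι → E) :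
    0 ≤ truncReciprocalSum s x θ :=
  sum_nonneg fun _ _ => mul_nonneg (by positivity) (prod_nonneg fun _ _ => truncInvNorm_nonneg _ _)

lemma exists_reciprocalSum_le_add_truncReciprocalSum {s : Finset ι} {θ : ι → E}
    (h : ∀ᶠ n : ℕ in Filter.atTop, ∀ i ∈ s, 1 / (2 * (n : ℝ) ^ 2) ≤ ‖n • θ i‖) :
    ∃ D, 0 ≤ D ∧ ∀ x, reciprocalSum s x θ ≤ D + truncReciprocalSum s x θ := by
  have hle : ∀ᶠ n : ℕ in Filter.cofinite, 1 / ((n : ℝ) * ∏ i ∈ s, ‖n • θ i‖) ≤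
      1 / (n : ℝ) * ∏ i ∈ s, truncInvNorm (1 / (2 * (n : ℝ) ^ 2)) (n • θ i) := by
    rw [Nat.cofinite_eq_atTop]
    filter_upwards [h] with n hn
    rw [prod_congr rfl fun i hi => truncInvNorm_of_le (hn i hi), prod_inv_distrib, one_div,
      one_div, mul_inv]
  obtain ⟨D, hD, hsum⟩ := exists_forall_sum_le_add_sum hle
  exact ⟨D, hD, fun x => hsum _⟩

end Sums

section Torus

variable {ι : Type*} (s : Finset ι)

lemma continuous_prod_truncInvNorm_nsmul {ε : ℝ} (hε : 0 < ε) (n : ℕ) :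
    Continuous fun θ : UnitAddTorus ι => ∏ i ∈ s, truncInvNorm ε (n • θ i) :=
  continuous_finsetProd s fun i _ =>
    (continuous_truncInvNorm hε).comp ((continuous_nsmul n).comp (continuous_apply i))

variable [Fintype ι]

lemma integral_prod_truncInvNorm_nsmul {ε : ℝ} (hε : 0 < ε) (hε' : ε ≤ 1 / 2) {n : ℕ}
    (hn : n ≠ 0) :
    ∫ θ : UnitAddTorus ι, ∏ i ∈ s, truncInvNorm ε (n • θ i) =
      (2 * (1 + Real.log (1 / 2 / ε))) ^ #s := by
  have hmp := measurePreserving_nsmul_unitAddCircle hn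
  have hcomp : ∫ y : UnitAddCircle, truncInvNorm ε (n • y) =
      ∫ y : UnitAddCircle, truncInvNorm ε y := by
    nth_rewrite 2 [← hmp.map_eq]
    exact (integral_map hmp.aemeasurable
      (continuous_truncInvNorm hε).aestronglyMeasurable).symm
  rw [volume_pi, integral_prod_eval_eq_pow (fun y : UnitAddCircle => truncInvNorm ε (n • y)),
    hcomp, integral_truncInvNorm_unitAddCircle hε hε']

lemma integrable_truncReciprocalSum_term {n : ℕ} (hn : n ≠ 0) :
    Integrable fun θ : UnitAddTorus ι =>
      1 / (n : ℝ) * ∏ i ∈ s, truncInvNorm (1 / (2 * (n : ℝ) ^ 2)) (n • θ i) :=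
  ((continuous_prod_truncInvNorm_nsmul s (by positivity) n).integrable_of_hasCompactSupport
    (.of_compactSpace _)).const_mul _

lemma integrable_truncReciprocalSum (x : ℝ) :
    Integrable (truncReciprocalSum s x : UnitAddTorus ι → ℝ) :=
  integrable_finsetSum _ fun _ hn =>
    integrable_truncReciprocalSum_term s (Nat.one_le_iff_ne_zero.mp (mem_Icc.mp hn).1)

lemma integral_truncReciprocalSum_term {n : ℕ} (hn : n ≠ 0) :
    ∫ θ : UnitAddTorus ι,
        1 / (n : ℝ) * ∏ i ∈ s, truncInvNorm (1 / (2 * (n : ℝ) ^ 2)) (n • θ i) =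
      1 / (n : ℝ) * (2 * (1 + 2 * Real.log n)) ^ #s := by
  have hn1 : (1 : ℝ) ≤ n := by exact_mod_cast Nat.one_le_iff_ne_zero.mpr hn
  have hcut : 1 / (2 * (n : ℝ) ^ 2) ≤ 1 / 2 :=
    one_div_le_one_div_of_le two_pos (by nlinarith)
  have hratio : 1 / 2 / (1 / (2 * (n : ℝ) ^ 2)) = (n : ℝ) ^ 2 := by field_simp
  rw [integral_const_mul, integral_prod_truncInvNorm_nsmul s (by positivity) hcut hn, hratio,
    Real.log_pow, Nat.cast_ofNat]

lemma integral_truncReciprocalSum_le {x : ℝ} (hx : 1 ≤ x) :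
    ∫ θ : UnitAddTorus ι, truncReciprocalSum s x θ ≤
      4 ^ #s * (1 + Real.log x) ^ (#s + 1) := by
  have hlogx : 0 ≤ Real.log x := Real.log_nonneg hx
  unfold truncReciprocalSum
  rw [integral_finsetSum _ fun n hn =>
    integrable_truncReciprocalSum_term s (Nat.one_le_iff_ne_zero.mp (mem_Icc.mp hn).1)]
  calc ∑ n ∈ Icc 1 ⌊x⌋₊, ∫ θ : UnitAddTorus ι,
        1 / (n : ℝ) * ∏ i ∈ s, truncInvNorm (1 / (2 * (n : ℝ) ^ 2)) (n • θ i)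
      ≤ ∑ n ∈ Icc 1 ⌊x⌋₊, 1 / (n : ℝ) * (4 * (1 + Real.log x)) ^ #s := by
        refine sum_le_sum fun n hn => ?_
        obtain ⟨h1, hnx⟩ := mem_Icc.mp hn
        have hn0 : (0 : ℝ) < n := by exact_mod_cast h1
        have hlog : Real.log n ≤ Real.log x :=
          Real.log_le_log hn0 ((Nat.le_floor_iff (by positivity)).mp hnx)
        have := Real.log_natCast_nonneg n
        rw [integral_truncReciprocalSum_term s (Nat.one_le_iff_ne_zero.mp h1)]
        exact mul_le_mul_of_nonneg_left (pow_le_pow_left₀ (by positivity) (by linarith) _)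
          (by positivity)
    _ = harmonic ⌊x⌋₊ * (4 * (1 + Real.log x)) ^ #s := by
        simp only [harmonic_eq_sum_Icc, ← sum_mul, one_div, Rat.cast_sum, Rat.cast_inv,
          Rat.cast_natCast]
    _ ≤ (1 + Real.log x) * (4 * (1 + Real.log x)) ^ #s := by
        gcongr
        exact harmonic_floor_le_one_add_log x hx
    _ = 4 ^ #s * (1 + Real.log x) ^ (#s + 1) := by rw [mul_pow]; ring

lemma ae_eventually_one_div_le_norm_nsmul :
    ∀ᵐ θ : UnitAddTorus ι, ∀ᶠ n : ℕ in Filter.atTop, ∀ i,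
      1 / (2 * (n : ℝ) ^ 2) ≤ ‖n • θ i‖ := by
  have hsum : Summable fun n : ℕ => 1 / (2 * (n : ℝ) ^ 2) := by
    simpa only [one_div, mul_inv] using
      (Real.summable_nat_pow_inv.mpr one_lt_two).mul_left (2⁻¹ : ℝ)
  have hcoord (i : ι) : ∀ᵐ θ : UnitAddTorus ι, ∀ᶠ n : ℕ in Filter.atTop,
      1 / (2 * (n : ℝ) ^ 2) < ‖n • θ i‖ :=
    (Measure.quasiMeasurePreserving_eval (μ := fun _ : ι => (volume : Measure UnitAddCircle)) i).ae
      (ae_eventually_lt_norm_nsmul hsum)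
  filter_upwards [ae_all_iff.mpr hcoord] with θ hθ
  filter_upwards [Filter.eventually_all.mpr hθ] with n hn i using (hn i).le

variable {τ : Type*} [Countable τ]

lemma ae_exists_truncReciprocalSum_le {φ : τ → ℝ} (hpos : ∀ t, 0 < φ t)
    (hsum : Summable fun t => 1 / φ t) {x : τ → ℝ} (hx : ∀ t, 1 ≤ x t) :
    ∀ᵐ θ : UnitAddTorus ι, ∃ B, 0 ≤ B ∧ ∀ t, truncReciprocalSum s (x t) θ ≤
      B * ((1 + Real.log (x t)) ^ (#s + 1) * φ t) := by
  have hlog (t : τ) : 0 < (1 + Real.log (x t)) ^ (#s + 1) := by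
    have := Real.log_nonneg (hx t)
    positivity
  have hnorm (t : τ) (θ : UnitAddTorus ι) :
      ‖truncReciprocalSum s (x t) θ‖ = truncReciprocalSum s (x t) θ :=
    Real.norm_of_nonneg (truncReciprocalSum_nonneg _ _ _)
  have hratio : Summable fun t => (∫ θ : UnitAddTorus ι, ‖truncReciprocalSum s (x t) θ‖) /
      ((1 + Real.log (x t)) ^ (#s + 1) * φ t) := by
    refine (hsum.mul_left (4 ^ #s)).of_nonneg_of_le (fun t => ?_) fun t => ?_
    · exact div_nonneg (integral_nonneg fun _ => norm_nonneg _)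
        (mul_pos (hlog t) (hpos t)).le
    · rw [div_le_iff₀ (mul_pos (hlog t) (hpos t))]
      simp only [hnorm]
      refine (integral_truncReciprocalSum_le s (hx t)).trans_eq ?_
      field_simp [(hpos t).ne']
  simpa only [hnorm] using ae_exists_forall_norm_le_mul
    (fun t => integrable_truncReciprocalSum s (x t)) (fun t => mul_pos (hlog t) (hpos t)) hratio

theorem ae_exists_reciprocalSum_le {φ : τ → ℝ} (hpos : ∀ t, 0 < φ t)
    (hsum : Summable fun t => 1 / φ t) {x : τ → ℝ} (hx : ∀ t, 1 ≤ x t) :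
    ∀ᵐ θ : UnitAddTorus ι, ∃ C, 0 ≤ C ∧ ∀ t, reciprocalSum s (x t) θ ≤
      C * ((1 + Real.log (x t)) ^ (#s + 1) * φ t) := by
  obtain ⟨c, hc, hcφ⟩ := exists_pos_forall_le_of_summable_one_div hpos hsum
  filter_upwards [ae_eventually_one_div_le_norm_nsmul,
    ae_exists_truncReciprocalSum_le s hpos hsum hx] with θ hθ ⟨B, hB, htrunc⟩
  obtain ⟨D, hD, hsplit⟩ := exists_reciprocalSum_le_add_truncReciprocalSum (s := s)
    (hθ.mono fun n hn i _ => hn i)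
  refine ⟨D / c + B, by positivity, fun t => ?_⟩
  have hlog : 1 ≤ (1 + Real.log (x t)) ^ (#s + 1) :=
    one_le_pow₀ (by linarith [Real.log_nonneg (hx t)])
  have hconst : D ≤ D / c * ((1 + Real.log (x t)) ^ (#s + 1) * φ t) := by
    calc D = D / c * (1 * c) := by field_simp
      _ ≤ _ := by gcongr; exact hcφ t
  linarith [hsplit (x t), htrunc t]

end Torus

lemma one_le_log_natCast {N : ℕ} (hN : 3 ≤ N) : 1 ≤ Real.log N := by
  have hN' : (3 : ℝ) ≤ N := by exact_mod_cast hN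
  rw [Real.le_log_iff_exp_le (by linarith)]
  linarith [Real.exp_one_lt_three]

lemma sq_mul_log_sq_le_exp {y : ℝ} (hy : 1 < y) :
    y ^ 2 * Real.log y ^ 2 ≤ Real.exp (4 * Real.exp ⌈Real.log (Real.log y)⌉₊) := by
  have hlog : 0 < Real.log y := Real.log_pos hy
  have hy0 : 0 < y := one_pos.trans hy
  calc y ^ 2 * Real.log y ^ 2 ≤ y ^ 2 * y ^ 2 := by
        gcongr
        exact Real.log_le_self hy0.le
    _ = Real.exp (4 * Real.exp (Real.log (Real.log y))) := by
        rw [Real.exp_log hlog, mul_comm 4, Real.exp_mul, Real.exp_log hy0]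
        norm_cast
        ring
    _ ≤ Real.exp (4 * Real.exp ⌈Real.log (Real.log y)⌉₊) := by
        gcongr
        exact Nat.le_ceil _

lemma exp_natCeil_log_le {y : ℝ} (hy : 1 ≤ y) :
    Real.exp ⌈Real.log y⌉₊ ≤ Real.exp 1 * y := by
  calc Real.exp ⌈Real.log y⌉₊ ≤ Real.exp (1 + Real.log y) :=
        Real.exp_le_exp.mpr (by linarith [Nat.ceil_lt_add_one (Real.log_nonneg hy)])
    _ = Real.exp 1 * y := by rw [Real.exp_add, Real.exp_log (by linarith)]

theorem ae_exists_reciprocalSum_sq_mul_log_sq_le {ι : Type*} [Fintype ι] (s : Finset ι)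
    {φ : ℕ → ℝ} (hpos : ∀ n, 0 < φ n) (hsum : Summable fun n => 1 / φ n) :
    ∀ᵐ θ : UnitAddTorus ι, ∃ C, 0 ≤ C ∧ ∀ N : ℕ, 3 ≤ N →
      reciprocalSum s ((N : ℝ) ^ 2 * Real.log N ^ 2) θ ≤
        C * Real.log N ^ (#s + 1) * φ ⌈Real.log (Real.log N)⌉₊ := by
  have hscale (t : ℕ) : 1 ≤ Real.exp (4 * Real.exp t) := Real.one_le_exp (by positivity)
  filter_upwards [ae_exists_reciprocalSum_le s hpos hsum hscale] with θ ⟨C, hC, hbound⟩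
  refine ⟨C * (5 * Real.exp 1) ^ (#s + 1), by positivity, fun N hN => ?_⟩
  have hL := one_le_log_natCast hN
  set t := ⌈Real.log (Real.log N)⌉₊
  have hlog : 1 + Real.log (Real.exp (4 * Real.exp t)) ≤ 5 * Real.exp 1 * Real.log N := by
    rw [Real.log_exp]
    linarith [exp_natCeil_log_le hL, Real.one_le_exp (Nat.cast_nonneg (α := ℝ) t)]
  have hφt := (hpos t).le
  calc reciprocalSum s ((N : ℝ) ^ 2 * Real.log N ^ 2) θ
      ≤ reciprocalSum s (Real.exp (4 * Real.exp t)) θ :=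
        reciprocalSum_mono s θ (sq_mul_log_sq_le_exp (by exact_mod_cast (by lia : 1 < N)))
    _ ≤ C * ((1 + Real.log (Real.exp (4 * Real.exp t))) ^ (#s + 1) * φ t) := hbound t
    _ ≤ C * ((5 * Real.exp 1 * Real.log N) ^ (#s + 1) * φ t) := by
        have := Real.log_nonneg (hscale t)
        gcongr
    _ = C * (5 * Real.exp 1) ^ (#s + 1) * Real.log N ^ (#s + 1) * φ t := by
        rw [mul_pow _ (Real.log N)]; ring

theorem stmt_9_general {ι : Type*} [Fintype ι] {φ : ℕ → ℝ} (hφpos : ∀ n, 0 < φ n)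
    (hφsum : Summable fun n => 1 / φ n) {k : ℕ} (hk : k ≠ 0) :
    ∀ᵐ α : ι → ℝ, ∀ s : Finset ι, ∃ C : ℝ, ∀ N : ℕ, 3 ≤ N →
      ∑ n ∈ Icc 1 ⌊(N : ℝ) ^ 2 * Real.log N ^ 2⌋₊, 1 / (n * ∏ i ∈ s, nid (n * α i)) ≤
        C * Real.log N ^ (#s + 1) * φ ⌈Real.log (Real.log N)⌉₊ ^ k := by
  obtain ⟨c, hφpow⟩ := exists_le_mul_pow_of_summable_one_div hφpos hφsum hk
  filter_upwards [ae_coe_of_ae_unitAddTorus (ae_all_iff.mpr fun s =>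
    ae_exists_reciprocalSum_sq_mul_log_sq_le s hφpos hφsum)] with α hα s
  obtain ⟨C, hC, hbound⟩ := hα s
  refine ⟨C * c, fun N hN => ?_⟩
  simp only [nid_natCast_mul]
  calc reciprocalSum s ((N : ℝ) ^ 2 * Real.log N ^ 2) (fun i => (α i : UnitAddCircle))
      ≤ C * Real.log N ^ (#s + 1) * φ ⌈Real.log (Real.log N)⌉₊ := hbound N hN
    _ ≤ C * Real.log N ^ (#s + 1) * (c * φ ⌈Real.log (Real.log N)⌉₊ ^ k) :=
        mul_le_mul_of_nonneg_left (hφpow _)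
          (mul_nonneg hC (pow_nonneg (Real.log_natCast_nonneg N) _))
    _ = C * c * Real.log N ^ (#s + 1) * φ ⌈Real.log (Real.log N)⌉₊ ^ k := by ring

/-- For a.e. `α ∈ ℝ^d` and every `1 ≤ j ≤ d` there is `C(α,φ,j)` with
`∑_{n=1}^{⌊N²(log N)²⌋} 1/(n·∏_{i≠j}‖nα_i‖) ≤ C·(log N)^d·φ(log log N)^d` for `N ≥ 3`. -/
theorem stmt_9 (d : ℕ) (hd : 1 ≤ d) (φ : ℕ → ℝ) (hφpos : ∀ n, 0 < φ n)
    (hφmono : Monotone φ) (hφsum : Summable fun n => 1 / φ n) :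
    ∀ᵐ α ∂(volume : Measure (Fin d → ℝ)),
      ∀ j : Fin d, ∃ C : ℝ, ∀ N : ℕ, 3 ≤ N →
        ∑ n ∈ Finset.Icc 1 (Nat.floor ((N : ℝ) ^ 2 * Real.log N ^ 2)),
            1 / ((n : ℝ) * ∏ i ∈ Finset.univ.erase j, nid ((n : ℝ) * α i)) ≤
          C * Real.log N ^ d * φ (Nat.ceil (Real.log (Real.log N))) ^ d := by
  filter_upwards [stmt_9_general hφpos hφsum (Nat.one_le_iff_ne_zero.mp hd)] with α hα j
  simpa [Nat.sub_add_cancel hd] using hα (univ.erase j)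
end
end

section
/- Let d ≥ 1 and let φ : ℕ → (0,∞) be a positive increasing function with ∑_{n=1}^∞ 1/φ(n) < ∞. For Lebesgue-almost every α = (α₁,…,α_d) ∈ [0,1]^d there is a constant c(α,φ) > 0 such that for every integer n with |n| > 1: (i) |n|·∏_{i=1}^d ‖nα_i‖ ≥ c(α,φ) / [ (log |n|)^d · φ(⌈log log |n|⌉) ], and (ii) ‖nα_i‖ ≥ c(α,φ) / ( |n|·φ(⌈log |n|⌉) ) for every 1 ≤ i ≤ d. -/
open MeasureTheory Finset

noncomputable section

/-!
Multiplication by `n ≠ 0` preserves the Haar measure of the torus, so the law of `∏ i, ‖n α_i‖`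
does not depend on `n`. Fixing all coordinates but one and using a moment of order
`-s = -(1 - 1 / L)` with `L` of size `log n`, this product is below `ε` with probability
`O(ε (log n) ^ (d - 1))`, as long as `ε` is at least a fixed negative power of `n`. For
`ε = g ⌈log log n⌉ / (n (log n) ^ d)` with `g = 1 / φ` these probabilities are summable, because
`1 / (n log n)` is comparable to the increment of `log log n`, so that the `n` on which
`⌈log log n⌉ = k` contribute `O(g k)`. Replacing `g k` by `g k + exp (-k)` keeps `ε` from being
too small. By Borel–Cantelli the bounds hold with `c = 1` for all but finitely many `n`, and the
exceptions only decrease `c` since almost surely no `‖n α_i‖` vanishes. Single coordinates are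
treated in the same way, with the increments of `log n`.
-/

open Filter
open scoped ENNReal Topology

section Summation

variable {F g : ℕ → ℝ} {J : ℝ}

lemma sum_sub_filter_ceil_eq_le (hF : Monotone F) (hF0 : 0 ≤ F 0)
    (hstep : ∀ n, F (n + 1) - F n ≤ J) (k N : ℕ) :
    ∑ n ∈ range N with ⌈F (n + 1)⌉₊ = k, (F (n + 1) - F n) ≤ 1 + J := by
  -- Once clamped to `[k - 1 - J, k]`, `F` has the same increments on the fibre over `k` and
  -- nonnegative ones elsewhere, so the sum telescopes.
  let clamp (x : ℝ) : ℝ := max (k - 1 - J) (min x k)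
  have clamp_mono : Monotone clamp := fun x y hxy => by simp only [clamp]; gcongr
  have clamp_eq {x : ℝ} (h₁ : k - 1 - J ≤ x) (h₂ : x ≤ k) : clamp x = x := by
    simp only [clamp, min_eq_left h₂, max_eq_right h₁]
  calc ∑ n ∈ range N with ⌈F (n + 1)⌉₊ = k, (F (n + 1) - F n)
      ≤ ∑ n ∈ range N, (clamp (F (n + 1)) - clamp (F n)) := by
        rw [sum_filter]
        refine sum_le_sum fun n _ => ?_
        have hle := hF n.le_succ
        split_ifs with hk
        · have hub : F (n + 1) ≤ k := hk ▸ Nat.le_ceil _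
          have hlb : (k : ℝ) < F (n + 1) + 1 :=
            hk ▸ Nat.ceil_lt_add_one (hF0.trans (hF (Nat.zero_le _)))
          have := hstep n
          rw [clamp_eq (by linarith) hub, clamp_eq (by linarith) (hle.trans hub)]
        · exact sub_nonneg.2 (clamp_mono hle)
    _ = clamp (F N) - clamp (F 0) := sum_range_sub (fun n => clamp (F n)) N
    _ ≤ k - (k - 1 - J) := by
        have hJ : 0 ≤ J := (sub_nonneg.2 (hF (Nat.zero_le 1))).trans (hstep 0)
        exact sub_le_sub (max_le (by linarith) (min_le_right _ _)) (le_max_left _ _)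
    _ = 1 + J := by ring

lemma summable_sub_mul_comp_ceil (hF : Monotone F) (hF0 : 0 ≤ F 0)
    (hstep : ∀ n, F (n + 1) - F n ≤ J) (hg0 : ∀ k, 0 ≤ g k) (hg : Summable g) :
    Summable fun n => (F (n + 1) - F n) * g ⌈F (n + 1)⌉₊ := by
  have hJ : 0 ≤ J := (sub_nonneg.2 (hF (Nat.zero_le 1))).trans (hstep 0)
  refine summable_of_sum_range_le (c := (1 + J) * ∑' k, g k)
    (fun n => mul_nonneg (sub_nonneg.2 (hF n.le_succ)) (hg0 _)) fun N => ?_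
  let fibres := (range N).image fun n => ⌈F (n + 1)⌉₊
  calc ∑ n ∈ range N, (F (n + 1) - F n) * g ⌈F (n + 1)⌉₊
      = ∑ k ∈ fibres, ∑ n ∈ range N with ⌈F (n + 1)⌉₊ = k,
          (F (n + 1) - F n) * g ⌈F (n + 1)⌉₊ :=
        (sum_fiberwise_of_maps_to (fun n hn => mem_image_of_mem _ hn) _).symm
    _ = ∑ k ∈ fibres, (∑ n ∈ range N with ⌈F (n + 1)⌉₊ = k, (F (n + 1) - F n)) * g k := by
        refine sum_congr rfl fun k _ => ?_
        rw [sum_mul]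
        exact sum_congr rfl fun n hn => by rw [(mem_filter.1 hn).2]
    _ ≤ ∑ k ∈ fibres, (1 + J) * g k := by
        gcongr with k
        · exact hg0 k
        · exact sum_sub_filter_ceil_eq_le hF hF0 hstep k N
    _ ≤ (1 + J) * ∑' k, g k := by
        rw [← mul_sum]
        gcongr
        exact hg.sum_le_tsum _ fun k _ => hg0 k

lemma sub_div_le_log_sub_log {x y : ℝ} (hx : 0 < x) (hy : 0 < y) :
    (x - y) / x ≤ Real.log x - Real.log y := by
  rw [← Real.log_div hx.ne' hy.ne', sub_div, div_self hx.ne', ← inv_div]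
  exact Real.one_sub_inv_le_log_of_pos (div_pos hx hy)

lemma log_sub_log_le_sub {x y : ℝ} (hy : 1 ≤ y) (hyx : y ≤ x) :
    Real.log x - Real.log y ≤ x - y := by
  have hy0 : 0 < y := one_pos.trans_le hy
  have hlog : -(Real.log x - Real.log y) ≥ -((x - y) / y) := by
    rw [neg_sub, ← neg_div, neg_sub]
    exact sub_div_le_log_sub_log hy0 (hy0.trans_le hyx)
  exact (neg_le_neg_iff.1 hlog).trans (div_le_self (sub_nonneg.2 hyx) hy)

lemma summable_sub_div_mul_comp_ceil_log (hF : Monotone F) (hF1 : 1 ≤ F 0)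
    (hstep : ∀ n, F (n + 1) - F n ≤ J) (hg0 : ∀ k, 0 ≤ g k) (hg : Summable g) :
    Summable fun n => (F (n + 1) - F n) / F (n + 1) * g ⌈Real.log (F (n + 1))⌉₊ := by
  have hF1' (n : ℕ) : 1 ≤ F n := hF1.trans (hF n.zero_le)
  have hpos (n : ℕ) : 0 < F n := one_pos.trans_le (hF1' n)
  refine (summable_sub_mul_comp_ceil (F := fun n => Real.log (F n))
    (fun a b hab => Real.log_le_log (hpos a) (hF hab)) (Real.log_nonneg hF1)
    (fun n => (log_sub_log_le_sub (hF1' n) (hF n.le_succ)).trans (hstep n)) hg0 hg).of_nonneg_of_le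
    (fun n => ?_) fun n => ?_
  · exact mul_nonneg (div_nonneg (sub_nonneg.2 (hF n.le_succ)) (hpos _).le) (hg0 _)
  · exact mul_le_mul_of_nonneg_right (sub_div_le_log_sub_log (hpos _) (hpos _)) (hg0 _)

lemma summable_comp_log_div (hg0 : ∀ k, 0 ≤ g k) (hg : Summable g) :
    Summable fun n : ℕ => g ⌈Real.log n⌉₊ / n := by
  have h := summable_sub_div_mul_comp_ceil_log (F := fun n => n + 1) (J := 1)
    (fun a b hab => by simpa using hab) (by simp) (by simp) hg0 hg
  rw [← summable_nat_add_iff 2]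
  refine h.congr fun n => ?_
  have : ((n + 1 : ℕ) : ℝ) + 1 = (n + 2 : ℕ) := by push_cast; ring
  simp only [this]
  push_cast
  ring

lemma summable_comp_log_log_div (hg0 : ∀ k, 0 ≤ g k) (hg : Summable g) :
    Summable fun n : ℕ => g ⌈Real.log (Real.log n)⌉₊ / (n * Real.log n) := by
  have hcast (n : ℕ) : (3 : ℝ) ≤ n + 3 := by simp
  have hlog3 : 1 ≤ Real.log 3 :=
    (Real.le_log_iff_exp_le (by norm_num)).2 Real.exp_one_lt_three.le
  have h := summable_sub_div_mul_comp_ceil_log (F := fun n => Real.log (n + 3)) (J := 1)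
    (fun a b hab => by dsimp only; gcongr) (by simpa using hlog3)
    (fun n => by
      have := log_sub_log_le_sub (x := ((n + 1 : ℕ) : ℝ) + 3) (y := n + 3)
        (by linarith [hcast n]) (by simp)
      push_cast at this ⊢
      linarith) hg0 hg
  rw [← summable_nat_add_iff 4]
  refine h.of_nonneg_of_le (fun n => ?_) fun n => ?_
  · exact div_nonneg (hg0 _) (mul_nonneg (Nat.cast_nonneg _) (Real.log_natCast_nonneg _))
  have hx : ((n + 1 : ℕ) : ℝ) + 3 = (n + 4 : ℕ) := by push_cast; ring
  have hincr : 1 / ((n + 4 : ℕ) : ℝ) ≤ Real.log (n + 4 : ℕ) - Real.log (n + 3) := by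
    convert! sub_div_le_log_sub_log (x := ((n + 4 : ℕ) : ℝ)) (y := n + 3) (by positivity)
      (by positivity) using 2
    push_cast
    ring
  have := Real.log_natCast_nonneg (n + 4)
  have := hg0 ⌈Real.log (Real.log (n + 4 : ℕ))⌉₊
  simp only [hx]
  calc _ = 1 / ((n + 4 : ℕ) : ℝ) / Real.log (n + 4 : ℕ) *
        g ⌈Real.log (Real.log (n + 4 : ℕ))⌉₊ := by ring
    _ ≤ _ := by gcongr

end Summation

section Probability

variable {Ω Ω' : Type*} [MeasurableSpace Ω] [MeasurableSpace Ω'] {μ : Measure Ω}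
  [IsProbabilityMeasure μ] {ν : Measure Ω'} [SFinite ν] {X : Ω → ℝ≥0∞} {A ε : ℝ≥0∞} {s : ℝ}

lemma measure_mul_lt_le (hA : A ≠ 0) (htail : ∀ t, μ {x | X x < t} ≤ A * t) (hs0 : 0 < s)
    (hs1 : s ≤ 1) (hε : ε ≠ 0) {p : ℝ≥0∞} (hp : p ≠ ∞) :
    μ {x | X x * p < ε} ≤ (A * ε) ^ s * p ^ (-s) := by
  rcases eq_or_ne p 0 with rfl | hp0
  · have : (A * ε) ^ s ≠ 0 := by simp [hA, hε, hs0.le]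
    simp [ENNReal.zero_rpow_of_neg (neg_lt_zero.2 hs0), ENNReal.mul_top this]
  have htail_rpow (t : ℝ≥0∞) : μ {x | X x < t} ≤ (A * t) ^ s := by
    rcases le_total (A * t) 1 with h | h
    · exact (htail t).trans (by simpa using ENNReal.rpow_le_rpow_of_exponent_ge h hs1)
    · exact prob_le_one.trans (ENNReal.one_le_rpow h hs0)
  calc μ {x | X x * p < ε} = μ {x | X x < ε / p} := by
        simp only [ENNReal.lt_div_iff_mul_lt (Or.inl hp0) (Or.inl hp)]
    _ ≤ (A * (ε / p)) ^ s := htail_rpow _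
    _ = (A * ε) ^ s * p ^ (-s) := by
        rw [← mul_div_assoc, ENNReal.div_rpow_of_nonneg _ _ hs0.le, ENNReal.rpow_neg,
          div_eq_mul_inv]

lemma prod_measure_mul_lt_le (hX : Measurable X) (hA : A ≠ 0)
    (htail : ∀ t, μ {x | X x < t} ≤ A * t) (hs0 : 0 < s) (hs1 : s ≤ 1) (hε : ε ≠ 0)
    {Y : Ω' → ℝ≥0∞} (hY : Measurable Y) (hYtop : ∀ y, Y y ≠ ∞) :
    (μ.prod ν) {z | X z.1 * Y z.2 < ε} ≤ (A * ε) ^ s * ∫⁻ y, Y y ^ (-s) ∂ν := by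
  rw [Measure.prod_apply_symm (measurableSet_lt (by fun_prop) measurable_const),
    ← lintegral_const_mul _ (by fun_prop)]
  exact lintegral_mono fun y => measure_mul_lt_le hA htail hs0 hs1 hε (hYtop y)

lemma lintegral_pi_prod_comp {ι : Type*} [Fintype ι] (hX : Measurable X) :
    ∫⁻ y, ∏ i : ι, X (y i) ∂(Measure.pi fun _ : ι => μ) = (∫⁻ x, X x ∂μ) ^ Fintype.card ι := by
  calc ∫⁻ y, ∏ i : ι, X (y i) ∂(Measure.pi fun _ : ι => μ)
      = ∏ i : ι, ∫⁻ y, X (y i) ∂(Measure.pi fun _ : ι => μ) :=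
        ProbabilityTheory.lintegral_prod_eq_prod_lintegral_of_indepFun _
          (fun i (y : ι → Ω) => X (y i)) (ProbabilityTheory.iIndepFun_pi fun _ => hX.aemeasurable)
          fun i => by fun_prop
    _ = (∫⁻ x, X x ∂μ) ^ Fintype.card ι := by
        simp only [(measurePreserving_eval (fun _ : ι => μ) _).lintegral_comp hX, prod_const,
          card_univ]

lemma pi_measure_prod_lt_le (hX : Measurable X) (hXtop : ∀ x, X x ≠ ∞) (hA : A ≠ 0)
    (htail : ∀ t, μ {x | X x < t} ≤ A * t) (hs0 : 0 < s) (hs1 : s ≤ 1) (hε : ε ≠ 0) (m : ℕ) :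
    (Measure.pi fun _ : Fin (m + 1) => μ) {y | ∏ i, X (y i) < ε} ≤
      (A * ε) ^ s * (∫⁻ x, X x ^ (-s) ∂μ) ^ m := by
  have hY : Measurable fun y : Fin m → Ω => ∏ i, X (y i) := by fun_prop
  have hYtop (y : Fin m → Ω) : ∏ i, X (y i) ≠ ∞ := ENNReal.prod_ne_top fun i _ => hXtop _
  have hsplit : MeasurePreserving (MeasurableEquiv.piFinSuccAbove (fun _ : Fin (m + 1) => Ω) 0)
      (Measure.pi fun _ => μ) (μ.prod (Measure.pi fun _ : Fin m => μ)) :=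
    measurePreserving_piFinSuccAbove (fun _ => μ) 0
  calc _ = (μ.prod (Measure.pi fun _ : Fin m => μ)) {z | X z.1 * ∏ i, X (z.2 i) < ε} := by
        refine Eq.trans ?_ (hsplit.measure_preimage_equiv _)
        congr 1 with y
        simp [Fin.prod_univ_succ, Fin.tail]
    _ ≤ (A * ε) ^ s * ∫⁻ y, (∏ i, X (y i)) ^ (-s) ∂(Measure.pi fun _ : Fin m => μ) :=
        prod_measure_mul_lt_le hX hA htail hs0 hs1 hε hY hYtop
    _ = (A * ε) ^ s * (∫⁻ x, X x ^ (-s) ∂μ) ^ m := by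
        simp only [← ENNReal.prod_rpow_of_ne_top fun _ _ => hXtop _]
        rw [lintegral_pi_prod_comp (X := fun x => X x ^ (-s)) (by fun_prop), Fintype.card_fin]

end Probability

lemma ae_eventually_notMem_of_summable {α : Type*} [MeasurableSpace α] {μ : Measure α}
    {s : ℕ → Set α} {b : ℕ → ℝ} (hb : Summable b)
    (hs : ∀ᶠ n in atTop, μ (s n) ≤ ENNReal.ofReal (b n)) :
    ∀ᵐ x ∂μ, ∀ᶠ n in atTop, x ∉ s n := by
  obtain ⟨N, hN⟩ := eventually_atTop.1 hs
  have htail : ∑' n, μ (s (n + N)) ≠ ∞ :=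
    ne_top_of_le_ne_top ((summable_nat_add_iff N).2 hb).tsum_ofReal_ne_top
      (ENNReal.tsum_le_tsum fun n => hN _ (Nat.le_add_left N n))
  filter_upwards [ae_eventually_notMem htail] with x hx
  rwa [← map_add_atTop_eq_nat N, eventually_map]

section Circle

lemma volume_enorm_lt_le (t : ℝ≥0∞) : volume {y : UnitAddCircle | ‖y‖ₑ < t} ≤ 2 * t := by
  rcases eq_or_ne t ∞ with rfl | ht
  · simp
  lift t to NNReal using ht
  calc volume {y : UnitAddCircle | ‖y‖ₑ < t} ≤ volume (Metric.closedBall (0 : UnitAddCircle) t) :=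
        measure_mono fun y hy => mem_closedBall_zero_iff.2 (by
          exact_mod_cast (enorm_lt_coe.1 hy).le)
    _ ≤ ENNReal.ofReal (2 * t) := by
        rw [AddCircle.volume_closedBall]
        exact ENNReal.ofReal_le_ofReal (min_le_right _ _)
    _ = 2 * t := by simp [ENNReal.ofReal_mul]

lemma setLIntegral_Ioc_neg_self_of_even {f : ℝ → ℝ≥0∞} (hf : f.Even) {b : ℝ} (hb : 0 ≤ b) :
    ∫⁻ x in Set.Ioc (-b) b, f x = 2 * ∫⁻ x in Set.Ioc 0 b, f x := by
  have hneg : ∫⁻ x in Set.Ioc (-b) 0, f x = ∫⁻ x in Set.Ioc 0 b, f x := by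
    have h := (Measure.measurePreserving_neg (volume : Measure ℝ)).setLIntegral_comp_preimage_emb
      (MeasurableEquiv.neg ℝ).measurableEmbedding f (Set.Ico 0 b)
    simpa [hf _, Measure.restrict_congr_set (Ico_ae_eq_Ioc (α := ℝ) (μ := volume))] using h
  rw [← Set.Ioc_union_Ioc_eq_Ioc (neg_nonpos.2 hb) hb,
    lintegral_union measurableSet_Ioc (Set.Ioc_disjoint_Ioc_of_le le_rfl), hneg, two_mul]

lemma setLIntegral_Ioc_zero_enorm_rpow_neg {b s : ℝ} (hb : 0 ≤ b) (hs : s < 1) :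
    ∫⁻ x in Set.Ioc 0 b, ‖x‖ₑ ^ (-s) = ENNReal.ofReal (b ^ (1 - s) / (1 - s)) := by
  have hint : IntegrableOn (fun x : ℝ => x ^ (-s)) (Set.Ioc 0 b) :=
    (intervalIntegrable_iff_integrableOn_Ioc_of_le hb).1
      (intervalIntegral.intervalIntegrable_rpow' (by linarith))
  calc ∫⁻ x in Set.Ioc 0 b, ‖x‖ₑ ^ (-s)
      = ∫⁻ x in Set.Ioc 0 b, ENNReal.ofReal (x ^ (-s)) :=
        setLIntegral_congr_fun measurableSet_Ioc fun x hx => by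
          rw [← ENNReal.ofReal_rpow_of_pos hx.1, Real.enorm_of_nonneg hx.1.le]
    _ = ENNReal.ofReal (∫ x in Set.Ioc 0 b, x ^ (-s)) := by
        refine (ofReal_integral_eq_lintegral_ofReal hint ?_).symm
        filter_upwards [ae_restrict_mem measurableSet_Ioc] with x hx
        exact Real.rpow_nonneg hx.1.le _
    _ = ENNReal.ofReal (b ^ (1 - s) / (1 - s)) := by
        rw [← intervalIntegral.integral_of_le hb, integral_rpow (Or.inl (by linarith)),
          Real.zero_rpow (by linarith), sub_zero, neg_add_eq_sub]

lemma lintegral_enorm_rpow_neg_le {s : ℝ} (hs : s < 1) :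
    ∫⁻ y : UnitAddCircle, ‖y‖ₑ ^ (-s) ≤ ENNReal.ofReal (2 / (1 - s)) := by
  have hs' : 0 < 1 - s := sub_pos.2 hs
  have henorm {x : ℝ} (hx : x ∈ Set.Ioc (-(1 / 2) : ℝ) (1 / 2)) :
      ‖(x : UnitAddCircle)‖ₑ = ‖x‖ₑ := by
    rw [← ofReal_norm, ← ofReal_norm, Real.norm_eq_abs,
      (AddCircle.norm_coe_eq_abs_iff _ one_ne_zero).2]
    rw [abs_one, abs_le]
    exact ⟨hx.1.le, hx.2⟩
  calc ∫⁻ y : UnitAddCircle, ‖y‖ₑ ^ (-s)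
      = ∫⁻ x in Set.Ioc (-(1 / 2) : ℝ) (1 / 2), ‖x‖ₑ ^ (-s) := by
        rw [← UnitAddCircle.lintegral_preimage (-(1 / 2)), show -(1 / 2) + 1 = (1 / 2 : ℝ) by
          norm_num]
        exact setLIntegral_congr_fun measurableSet_Ioc fun x hx => by rw [henorm hx]
    _ = 2 * ENNReal.ofReal ((1 / 2) ^ (1 - s) / (1 - s)) := by
        rw [setLIntegral_Ioc_neg_self_of_even (fun x => by rw [enorm_neg]) (by norm_num),
          setLIntegral_Ioc_zero_enorm_rpow_neg (by norm_num) hs]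
    _ = ENNReal.ofReal (2 * (1 / 2) ^ (1 - s) / (1 - s)) := by
        rw [mul_div_assoc, ENNReal.ofReal_mul zero_le_two, ENNReal.ofReal_ofNat]
    _ ≤ ENNReal.ofReal (2 / (1 - s)) := by
        gcongr
        exact mul_le_of_le_one_right zero_le_two
          (Real.rpow_le_one (by norm_num) (by norm_num) hs'.le)

instance : IsProbabilityMeasure (volume : Measure UnitAddCircle) := ⟨UnitAddCircle.measure_univ⟩

instance : NullSingletonClass (volume : Measure UnitAddCircle) where
  measure_singleton y := by
    rw [← Metric.closedBall_zero, AddCircle.volume_closedBall]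
    simp

end Circle

section Torus

lemma measurePreserving_nsmul {G : Type*} [AddCommGroup G] [TopologicalSpace G]
    [IsTopologicalAddGroup G] [MeasurableSpace G] [BorelSpace G] (μ : Measure G)
    [μ.IsAddHaarMeasure] [CompactSpace G] [DivisibleBy G ℤ] {n : ℕ} (hn : n ≠ 0) :
    MeasurePreserving (fun x : G => n • x) μ μ := by
  simpa using Measure.measurePreserving_zsmul μ (n := n) (by exact_mod_cast hn)

lemma volume_prod_norm_lt_le (m : ℕ) {ε L : ℝ} (hL : 1 < L) (hε : Real.exp (-L) ≤ ε) :
    volume {y : Fin (m + 1) → UnitAddCircle | ∏ i, ‖y i‖ < ε} ≤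
      ENNReal.ofReal (2 * Real.exp 1 * ε * (2 * L) ^ m) := by
  -- The moment of order `-s` with `s = 1 - 1 / L` is at most `2 * L`, while `ε ^ s ≤ e * ε`.
  have hL0 : 0 < L := one_pos.trans hL
  have hε0 : 0 < ε := (Real.exp_pos _).trans_le hε
  have hs0 : 0 < 1 - 1 / L := sub_pos.2 ((div_lt_one hL0).2 hL)
  have hs1 : 1 - 1 / L < 1 := sub_lt_self _ (one_div_pos.2 hL0)
  have hpow : (2 * ε) ^ (1 - 1 / L) ≤ 2 * Real.exp 1 * ε := by
    have hε_inv : (2 * ε) ^ (-(1 / L)) ≤ Real.exp 1 :=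
      calc (2 * ε) ^ (-(1 / L)) ≤ Real.exp (-L) ^ (-(1 / L)) :=
            Real.rpow_le_rpow_of_nonpos (Real.exp_pos _) (by linarith)
              (neg_nonpos.2 (one_div_pos.2 hL0).le)
        _ = Real.exp 1 := by rw [← Real.exp_mul]; congr 1; field_simp
    rw [sub_eq_add_neg, Real.rpow_add (by positivity), Real.rpow_one]
    nlinarith
  calc volume {y : Fin (m + 1) → UnitAddCircle | ∏ i, ‖y i‖ < ε}
      = volume {y : Fin (m + 1) → UnitAddCircle | ∏ i, ‖y i‖ₑ < ENNReal.ofReal ε} := by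
        simp only [← ofReal_norm, ← ENNReal.ofReal_prod_of_nonneg fun _ _ => norm_nonneg _,
          ENNReal.ofReal_lt_ofReal_iff hε0]
    _ ≤ (2 * ENNReal.ofReal ε) ^ (1 - 1 / L) *
          (∫⁻ y : UnitAddCircle, ‖y‖ₑ ^ (-(1 - 1 / L))) ^ m :=
        pi_measure_prod_lt_le measurable_enorm (fun _ => enorm_ne_top) two_ne_zero
          volume_enorm_lt_le hs0 hs1.le (by simpa using hε0) m
    _ ≤ (2 * ENNReal.ofReal ε) ^ (1 - 1 / L) * ENNReal.ofReal (2 / (1 - (1 - 1 / L))) ^ m := by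
        gcongr
        exact lintegral_enorm_rpow_neg_le hs1
    _ = ENNReal.ofReal ((2 * ε) ^ (1 - 1 / L) * (2 * L) ^ m) := by
        rw [← ENNReal.ofReal_ofNat 2, ← ENNReal.ofReal_mul zero_le_two,
          ENNReal.ofReal_rpow_of_pos (by positivity), sub_sub_cancel, div_div_eq_mul_div, div_one,
          ← ENNReal.ofReal_pow (by positivity), ← ENNReal.ofReal_mul (by positivity)]
    _ ≤ ENNReal.ofReal (2 * Real.exp 1 * ε * (2 * L) ^ m) := by gcongr

lemma volume_prod_norm_nsmul_lt_le (m : ℕ) {n : ℕ} (hn : n ≠ 0) {ε L : ℝ} (hL : 1 < L)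
    (hε : Real.exp (-L) ≤ ε) :
    volume {y : Fin (m + 1) → UnitAddCircle | ∏ i, ‖n • y i‖ < ε} ≤
      ENNReal.ofReal (2 * Real.exp 1 * ε * (2 * L) ^ m) := by
  have hmeas : MeasurableSet {y : Fin (m + 1) → UnitAddCircle | ∏ i, ‖y i‖ < ε} :=
    measurableSet_lt (by fun_prop) measurable_const
  exact ((measurePreserving_nsmul volume hn).measure_preimage hmeas.nullMeasurableSet).trans_le
    (volume_prod_norm_lt_le m hL hε)

variable {ι : Type*} [Fintype ι]

lemma measurePreserving_nsmul_apply {n : ℕ} (hn : n ≠ 0) (i : ι) :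
    MeasurePreserving (fun y : ι → UnitAddCircle => n • y i) :=
  (measurePreserving_nsmul volume hn).comp
    (measurePreserving_eval (fun _ : ι => (volume : Measure UnitAddCircle)) i)

lemma volume_norm_nsmul_lt_le {n : ℕ} (hn : n ≠ 0) (i : ι) (t : ℝ) :
    volume {y : ι → UnitAddCircle | ‖n • y i‖ < t} ≤ ENNReal.ofReal (2 * t) := by
  have hmeas : MeasurableSet {y : UnitAddCircle | ‖y‖ < t} :=
    measurableSet_lt measurable_norm measurable_const
  calc volume {y : ι → UnitAddCircle | ‖n • y i‖ < t}
      = volume {y : UnitAddCircle | ‖y‖ < t} :=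
        (measurePreserving_nsmul_apply hn i).measure_preimage hmeas.nullMeasurableSet
    _ = volume {y : UnitAddCircle | ‖y‖ₑ < ENNReal.ofReal t} := by
        simp only [← ofReal_norm, ENNReal.ofReal_lt_ofReal_iff_of_nonneg (norm_nonneg _)]
    _ ≤ 2 * ENNReal.ofReal t := volume_enorm_lt_le _
    _ = ENNReal.ofReal (2 * t) := by rw [ENNReal.ofReal_mul zero_le_two, ENNReal.ofReal_ofNat]

lemma ae_forall_norm_nsmul_pos :
    ∀ᵐ y : ι → UnitAddCircle, ∀ n : ℕ, n ≠ 0 → ∀ i, 0 < ‖n • y i‖ := by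
  simp only [ae_all_iff, norm_pos_iff]
  exact fun n hn i =>
    (measurePreserving_nsmul_apply hn i).quasiMeasurePreserving.ae (Measure.ae_ne volume 0)

lemma ae_of_ae_torus {p : (ι → UnitAddCircle) → Prop} (h : ∀ᵐ y, p y) :
    ∀ᵐ x : ι → ℝ, p fun i => x i := by
  have hcover : (⋃ k : ι → ℤ, Set.univ.pi fun i => Set.Ioc (k i : ℝ) (k i + 1)) = Set.univ :=
    Set.eq_univ_of_forall fun x => Set.mem_iUnion.2 ⟨fun i => ⌈x i⌉ - 1, fun i _ => by
      simpa [sub_lt_iff_lt_add] using ⟨Int.ceil_lt_add_one (x i), Int.le_ceil (x i)⟩⟩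
  rw [← Measure.restrict_univ (μ := volume), ← hcover, ae_restrict_iUnion_iff]
  intro k
  rw [volume_pi, Measure.restrict_pi_pi]
  exact (measurePreserving_pi _ _ fun i =>
    UnitAddCircle.measurePreserving_mk (k i)).quasiMeasurePreserving.ae h

end Torus

section BorelCantelli

variable {g : ℕ → ℝ}

lemma ae_eventually_le_norm_nsmul {ι : Type*} [Fintype ι] (hg0 : ∀ k, 0 ≤ g k) (hg : Summable g)
    (i : ι) :
    ∀ᵐ y : ι → UnitAddCircle, ∀ᶠ n : ℕ in atTop, g ⌈Real.log n⌉₊ / n ≤ ‖n • y i‖ := by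
  have h := ae_eventually_notMem_of_summable ((summable_comp_log_div hg0 hg).mul_left 2)
    ((eventually_ne_atTop 0).mono fun n hn => volume_norm_nsmul_lt_le hn i _)
  simpa only [Set.mem_ofPred_eq, not_lt] using h

lemma exp_neg_mul_log_le {n : ℕ} (hn : 3 ≤ n) {a : ℝ}
    (ha : Real.exp (-⌈Real.log (Real.log n)⌉₊) ≤ a) (m : ℕ) :
    Real.exp (-((m + 4) * Real.log n)) ≤ a / (n * Real.log n ^ (m + 1)) := by
  have hn3 : (3 : ℝ) ≤ n := by exact_mod_cast hn
  have hn0 : (0 : ℝ) < n := by linarith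
  have hlog1 : 1 ≤ Real.log n := by
    rw [Real.le_log_iff_exp_le hn0]
    linarith [Real.exp_one_lt_three]
  have hlogn : Real.log n ≤ n := Real.log_le_self hn0.le
  have hceil : Real.exp ⌈Real.log (Real.log n)⌉₊ ≤ n ^ 2 :=
    calc Real.exp ⌈Real.log (Real.log n)⌉₊ ≤ Real.exp (Real.log (Real.log n) + 1) := by
          gcongr
          exact (Nat.ceil_lt_add_one (Real.log_nonneg hlog1)).le
      _ = Real.log n * Real.exp 1 := by rw [Real.exp_add, Real.exp_log (by linarith)]
      _ ≤ n * n := by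
          gcongr
          linarith [Real.exp_one_lt_three]
      _ = n ^ 2 := (sq _).symm
  calc Real.exp (-((m + 4) * Real.log n)) = ((n : ℝ) ^ 2)⁻¹ / (n * (n : ℝ) ^ (m + 1)) := by
        rw [Real.exp_neg, mul_comm, ← Real.rpow_def_of_pos hn0]
        norm_cast
        push_cast
        field_simp
        ring
    _ ≤ (Real.exp ⌈Real.log (Real.log n)⌉₊)⁻¹ / (n * Real.log n ^ (m + 1)) := by gcongr
    _ ≤ a / (n * Real.log n ^ (m + 1)) := by
        rw [← Real.exp_neg]
        gcongr

lemma ae_eventually_le_prod_norm_nsmul_of_exp_neg_le (hgexp : ∀ k : ℕ, Real.exp (-k) ≤ g k)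
    (hg : Summable g) (m : ℕ) :
    ∀ᵐ y : Fin (m + 1) → UnitAddCircle, ∀ᶠ n : ℕ in atTop,
      g ⌈Real.log (Real.log n)⌉₊ / Real.log n ^ (m + 1) ≤ n * ∏ i, ‖n • y i‖ := by
  let ε (n : ℕ) : ℝ := g ⌈Real.log (Real.log n)⌉₊ / (n * Real.log n ^ (m + 1))
  let C : ℝ := 2 * Real.exp 1 * (2 * (m + 4)) ^ m
  have hg0 (k : ℕ) : 0 ≤ g k := (Real.exp_pos _).le.trans (hgexp k)
  have hvol (n : ℕ) (hn : 3 ≤ n) :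
      volume {y : Fin (m + 1) → UnitAddCircle | ∏ i, ‖n • y i‖ < ε n} ≤
        ENNReal.ofReal (C * (g ⌈Real.log (Real.log n)⌉₊ / (n * Real.log n))) := by
    have hlog1 : 1 ≤ Real.log n := by
      rw [Real.le_log_iff_exp_le (by positivity)]
      exact Real.exp_one_lt_three.le.trans (by exact_mod_cast hn)
    have hL : 1 < (m + 4) * Real.log n := by nlinarith [m.cast_nonneg (α := ℝ)]
    refine (volume_prod_norm_nsmul_lt_le m (by lia) hL
      (exp_neg_mul_log_le hn (hgexp _) m)).trans_eq ?_
    congr 1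
    simp only [C, ← mul_assoc 2 _ (Real.log n), mul_pow _ (Real.log n), pow_succ]
    field_simp
  have hnotMem := ae_eventually_notMem_of_summable
    ((summable_comp_log_log_div hg0 hg).mul_left C) ((eventually_ge_atTop 3).mono hvol)
  filter_upwards [hnotMem] with y hy
  filter_upwards [hy, eventually_gt_atTop 0] with n hn hn0
  calc g ⌈Real.log (Real.log n)⌉₊ / Real.log n ^ (m + 1) = n * ε n := by
        simp only [ε]
        field_simp
    _ ≤ n * ∏ i, ‖n • y i‖ := by
        gcongr
        exact not_lt.1 hn

lemma ae_eventually_le_prod_norm_nsmul (hg0 : ∀ k, 0 ≤ g k) (hg : Summable g) (m : ℕ) :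
    ∀ᵐ y : Fin (m + 1) → UnitAddCircle, ∀ᶠ n : ℕ in atTop,
      g ⌈Real.log (Real.log n)⌉₊ / Real.log n ^ (m + 1) ≤ n * ∏ i, ‖n • y i‖ := by
  have h := ae_eventually_le_prod_norm_nsmul_of_exp_neg_le (g := fun k => g k + Real.exp (-k))
    (fun k => le_add_of_nonneg_left (hg0 k)) (hg.add Real.summable_exp_neg_nat) m
  filter_upwards [h] with y hy
  filter_upwards [hy] with n hn
  have := Real.log_natCast_nonneg n
  refine le_trans ?_ hn
  gcongr
  exact le_add_of_nonneg_right (Real.exp_pos _).le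

lemma eventually_forall_mul_le_of_eventually_le {ι : Type*} {a b : ι → ℝ} {s : Set ι}
    (ha : ∀ i ∈ s, 0 < a i) (h : ∀ᶠ i in cofinite, b i ≤ a i) :
    ∀ᶠ c in 𝓝[>] (0 : ℝ), ∀ i ∈ s, c * b i ≤ a i := by
  have hexceptional : ∀ᶠ c in 𝓝[>] (0 : ℝ), ∀ i ∈ {i | ¬ b i ≤ a i}, i ∈ s → c * b i ≤ a i := by
    refine (eventually_all_finite h).2 fun i _ => eventually_imp_distrib_left.2 fun hi => ?_
    have htendsto : Tendsto (fun c => c * b i) (𝓝[>] 0) (𝓝 (0 * b i)) :=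
      (tendsto_nhdsWithin_of_tendsto_nhds tendsto_id).mul_const _
    exact htendsto.eventually_le_const (by simpa using ha i hi)
  filter_upwards [hexceptional, Ioo_mem_nhdsGT one_pos] with c hc hc01 i hi
  by_cases hba : b i ≤ a i
  · exact (mul_le_mul_of_nonneg_left hba hc01.1.le).trans
      (mul_le_of_le_one_left (ha i hi).le hc01.2.le)
  · exact hc i hba hi

lemma ae_exists_pos_forall_mul_le (hg0 : ∀ k, 0 ≤ g k) (hg : Summable g) (m : ℕ) :
    ∀ᵐ y : Fin (m + 1) → UnitAddCircle, ∃ c : ℝ, 0 < c ∧ ∀ n : ℕ, 1 < n →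
      c * (g ⌈Real.log (Real.log n)⌉₊ / Real.log n ^ (m + 1)) ≤ n * ∏ i, ‖n • y i‖ ∧
      ∀ i, c * (g ⌈Real.log n⌉₊ / n) ≤ ‖n • y i‖ := by
  filter_upwards [ae_forall_norm_nsmul_pos, ae_eventually_le_prod_norm_nsmul hg0 hg m,
    ae_all_iff.2 (ae_eventually_le_norm_nsmul hg0 hg)] with y hpos hprod hcoord
  rw [← Nat.cofinite_eq_atTop] at hprod hcoord
  have hn0 {n : ℕ} (hn : n ∈ Set.Ioi 1) : 0 < n := one_pos.trans hn
  have hprod' := eventually_forall_mul_le_of_eventually_le (s := Set.Ioi 1)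
    (fun n hn => mul_pos (Nat.cast_pos.2 (hn0 hn))
      (prod_pos fun i _ => hpos n (hn0 hn).ne' i)) hprod
  have hcoord' := eventually_all.2 fun i => eventually_forall_mul_le_of_eventually_le
    (s := Set.Ioi 1) (fun n hn => hpos n (hn0 hn).ne' i) (hcoord i)
  obtain ⟨c, ⟨hcprod, hccoord⟩, hc⟩ := ((hprod'.and hcoord').and self_mem_nhdsWithin).exists
  exact ⟨c, hc, fun n hn => ⟨hcprod n hn, fun i => hccoord i n hn⟩⟩

end BorelCantelli

lemma nid_intCast_mul (n : ℤ) (x : ℝ) : nid (n * x) = ‖n.natAbs • (x : UnitAddCircle)‖ := by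
  rw [norm_natAbs_smul, ← AddCircle.coe_zsmul, zsmul_eq_mul, UnitAddCircle.norm_eq, nid]

theorem stmt_11_general (d : ℕ) (hd : 1 ≤ d) (φ : ℕ → ℝ) (hφpos : ∀ n, 0 < φ n)
    (hφsum : Summable fun n => 1 / φ n) :
    ∀ᵐ α : Fin d → ℝ, ∃ c : ℝ, 0 < c ∧ ∀ n : ℤ, 1 < |n| →
      (c / (Real.log |(n : ℝ)| ^ d * φ (Nat.ceil (Real.log (Real.log |(n : ℝ)|)))) ≤
          |(n : ℝ)| * ∏ i : Fin d, nid ((n : ℝ) * α i)) ∧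
      ∀ i : Fin d,
        c / (|(n : ℝ)| * φ (Nat.ceil (Real.log |(n : ℝ)|))) ≤ nid ((n : ℝ) * α i) := by
  obtain ⟨m, rfl⟩ := Nat.exists_eq_add_of_le' hd
  filter_upwards [ae_of_ae_torus (ae_exists_pos_forall_mul_le
    (fun k => (one_div_pos.2 (hφpos k)).le) hφsum m)] with α ⟨c, hc, hbound⟩
  refine ⟨c, hc, fun n hn => ?_⟩
  have habs : |(n : ℝ)| = n.natAbs := by rw [Nat.cast_natAbs, Int.cast_abs]
  obtain ⟨hprod, hcoord⟩ := hbound n.natAbs (by rwa [Int.abs_eq_natAbs, Nat.one_lt_cast] at hn)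
  simp only [habs, nid_intCast_mul]
  refine ⟨?_, fun i => ?_⟩
  · simpa only [mul_one_div, div_div, mul_comm (φ _)] using hprod
  · simpa only [mul_one_div, div_div, mul_comm (φ _)] using hcoord i

/-- Lower bound for the small divisors: for a.e. `α ∈ [0,1]^d` there is `c(α,φ) > 0`
such that for every `|n| > 1`,
`|n|·∏‖nα_i‖ ≥ c/((log|n|)^d·φ(⌈log log|n|⌉))` and
`‖nα_i‖ ≥ c/(|n|·φ(⌈log|n|⌉))` for every `i`. -/
theorem stmt_11 (d : ℕ) (hd : 1 ≤ d) (φ : ℕ → ℝ) (hφpos : ∀ n, 0 < φ n)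
    (hφmono : Monotone φ) (hφsum : Summable fun n => 1 / φ n) :
    ∀ᵐ α ∂((volume : Measure (Fin d → ℝ)).restrict
        (Set.univ.pi fun _ : Fin d => Set.Icc (0 : ℝ) 1)),
      ∃ c : ℝ, 0 < c ∧ ∀ n : ℤ, 1 < |n| →
        (c / (Real.log |(n : ℝ)| ^ d * φ (Nat.ceil (Real.log (Real.log |(n : ℝ)|)))) ≤
            |(n : ℝ)| * ∏ i : Fin d, nid ((n : ℝ) * α i)) ∧
        ∀ i : Fin d,
          c / (|(n : ℝ)| * φ (Nat.ceil (Real.log |(n : ℝ)|))) ≤ nid ((n : ℝ) * α i) :=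
  ae_restrict_of_ae (stmt_11_general d hd φ hφpos hφsum)
end
end

section
/- Let d ≥ 1, let s ∈ ℕ be fixed, and let φ : ℕ → (0,∞) be a positive increasing function with ∑_{n=1}^∞ 1/φ(n) < ∞. For Lebesgue-almost every α = (α₁,…,α_d) ∈ [0,1]^d there is a constant C(α,φ,s) such that for all N ≥ 3, the sum of 1/( n·∏_{i=1}^d ‖nα_i‖ ) over all integers 1 ≤ n ≤ N²(log N)² satisfying n·∏_{i=1}^d ‖nα_i‖ < (log N)^s is at most C(α,φ,s)·(log N)^d·φ(log log N)^{d+1}. -/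
open MeasureTheory Finset

noncomputable section

/-!
Let `P β = ∏ i, ‖β i‖` on the torus. Multiplication by `n ≥ 1` preserves Haar measure, so for any
weight `w ≥ 0` the sums `∑ w (n * P (n • β))` and `∑ w (n * P β)` over `1 ≤ n ≤ M` have the same
mean. For `w x = 1 / x` on `[δ, T)` the second sum is easy: with `β` fixed, `n` runs over a
multiplicative window, so the sum is at most `(1 + log (T / δ)) / P β`, and it is empty unless
`P β ≥ δ / M`. The indicator of `x < δ` costs at most `δ / P β` in the same way. Since
`∫ 1 / max (P β) a` is of order at most `(log (1 / a)) ^ d`, the mean of the sum is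
`O(log (T / δ) * (log (M / δ)) ^ d)`.

Apply Borel–Cantelli along the scales `log N ≈ exp k`, with `δ = exp (-k (d + 1))` and bound
`B = exp (k d) * ψ k`: the normalised means are summable as soon as `∑ (k + 1) / ψ k` converges, and
monotonicity in the range of summation interpolates between scales. If `φ` is increasing with
`∑ 1 / φ n < ∞` then `k + 1 = O(φ k)`, so that `ψ = φ ^ (d + 1)` is admissible.
-/

open scoped ENNReal

section RealLemmas

lemma sum_Icc_one_div_le_one_add_log {m L : ℕ} (hm : 0 < m) (hL : m ≤ L) :
    ∑ n ∈ Icc m L, 1 / (n : ℝ) ≤ 1 + Real.log (L / m) := by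
  have hm' : (1 : ℝ) ≤ m := by exact_mod_cast hm
  induction L, hL using Nat.le_induction with
  | base =>
    rw [Icc_self, sum_singleton, div_self (by positivity), Real.log_one, add_zero]
    exact (div_le_one (by positivity)).2 hm'
  | succ L hL ih =>
    have hL' : (0 : ℝ) < L := by exact_mod_cast hm.trans_le hL
    have hstep := Real.log_le_sub_one_of_pos (x := (L : ℝ) / (L + 1)) (by positivity)
    have hdiff : (L : ℝ) / (L + 1) - 1 = -(1 / (L + 1)) := by field_simp; ring
    rw [sum_Icc_succ_top (by lia)]
    rw [Real.log_div (by positivity) (by positivity)] at ih hstep ⊢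
    push_cast
    linarith

lemma sum_one_div_le_one_add_log {S : Finset ℕ} {R : ℝ} (hS : 0 ∉ S) (hR : 1 ≤ R)
    (h : ∀ m ∈ S, ∀ n ∈ S, (n : ℝ) ≤ R * m) : ∑ n ∈ S, 1 / (n : ℝ) ≤ 1 + Real.log R := by
  rcases S.eq_empty_or_nonempty with rfl | hne
  · simpa using add_nonneg zero_le_one (Real.log_nonneg hR)
  have hmem := S.min'_mem hne
  have hpos : ∀ n ∈ S, 0 < n := fun n hn => Nat.pos_of_ne_zero (ne_of_mem_of_not_mem hn hS)
  have hmin : (0 : ℝ) < S.min' hne := by exact_mod_cast hpos _ hmem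
  have hmax : (0 : ℝ) < S.max' hne := by exact_mod_cast hpos _ (S.max'_mem hne)
  calc ∑ n ∈ S, 1 / (n : ℝ) ≤ ∑ n ∈ Icc (S.min' hne) (S.max' hne), 1 / (n : ℝ) := by
        gcongr
        exact fun n hn => mem_Icc.2 ⟨S.min'_le n hn, S.le_max' n hn⟩
    _ ≤ 1 + Real.log (S.max' hne / S.min' hne) :=
        sum_Icc_one_div_le_one_add_log (hpos _ hmem) (S.min'_le _ (S.max'_mem hne))
    _ ≤ 1 + Real.log R := by
        gcongr
        exact (div_le_iff₀ hmin).2 (h _ hmem _ (S.max'_mem hne))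

lemma prod_max_le_max_prod {ι R : Type*} [CommSemiring R] [LinearOrder R] [IsStrictOrderedRing R]
    {s : Finset ι} {u : ι → R} {a : R} (hu : ∀ i ∈ s, u i ≤ 1) (ha : 0 ≤ a) (ha1 : a ≤ 1) :
    ∏ i ∈ s, max (u i) a ≤ max (∏ i ∈ s, u i) a := by
  classical
  by_cases! h : ∀ i ∈ s, a ≤ u i
  · exact le_max_of_le_left (prod_congr rfl fun i hi => max_eq_left (h i hi)).le
  · obtain ⟨j, hj, hja⟩ := h
    refine le_max_of_le_right ?_
    rw [← mul_prod_erase _ _ hj, max_eq_right hja.le]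
    exact mul_le_of_le_one_right ha <| prod_le_one (fun i _ => le_max_of_le_right ha)
      fun i hi => max_le (hu i (mem_of_mem_erase hi)) ha1

lemma integral_neg_to_self_of_even {E : Type*} [NormedAddCommGroup E] [NormedSpace ℝ E] {f : ℝ → E}
    (hf : ∀ x, f (-x) = f x) {c : ℝ} (hint : IntervalIntegrable f volume 0 c) :
    ∫ x in -c..c, f x = (2 : ℝ) • ∫ x in 0..c, f x := by
  have hneg : ∫ x in -c..0, f x = ∫ x in 0..c, f x := by
    simpa [hf] using (intervalIntegral.integral_comp_neg (a := 0) (b := c) f).symm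
  have hint' : IntervalIntegrable f volume (-c) 0 := by
    simpa [hf] using ((IntervalIntegrable.iff_comp_neg (by simp)).1 hint).symm
  rw [← intervalIntegral.integral_add_adjacent_intervals hint' hint, hneg, two_smul]

lemma integral_one_div_max_norm_le {a : ℝ} (ha : 0 < a) :
    ∫ x : UnitAddCircle, 1 / max ‖x‖ a ≤ 4 * Real.log (1 + 1 / a) := by
  have hcont : Continuous fun x : ℝ => 1 / max ‖(x : UnitAddCircle)‖ a :=
    continuous_const.div ((AddCircle.continuous_mk' 1).norm.max continuous_const)
      fun x => (lt_max_of_lt_right ha).ne'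
  have heven : ∀ x : ℝ, 1 / max ‖((-x : ℝ) : UnitAddCircle)‖ a = 1 / max ‖(x : UnitAddCircle)‖ a :=
    fun x => by rw [AddCircle.coe_neg, norm_neg]
  have hint : IntervalIntegrable (fun x : ℝ => 2 * (x + a)⁻¹) volume 0 (1 / 2) := by
    refine (ContinuousOn.mul continuousOn_const
      (ContinuousOn.inv₀ (by fun_prop) fun x hx => ?_)).intervalIntegrable_of_Icc (by norm_num)
    exact (add_pos_of_nonneg_of_pos hx.1 ha).ne'
  have hbound : ∀ x ∈ Set.Icc (0 : ℝ) (1 / 2),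
      1 / max ‖(x : UnitAddCircle)‖ a ≤ 2 * (x + a)⁻¹ := by
    rintro x ⟨hx0, hx⟩
    have hnorm : ‖(x : UnitAddCircle)‖ = x := by
      rw [(AddCircle.norm_coe_eq_abs_iff 1 one_ne_zero).2 (by rwa [abs_of_nonneg hx0, abs_one]),
        abs_of_nonneg hx0]
    rw [hnorm, ← div_eq_mul_inv, div_le_div_iff₀ (lt_max_of_lt_right ha) (by positivity)]
    linarith [le_max_left x a, le_max_right x a]
  calc ∫ x : UnitAddCircle, 1 / max ‖x‖ a
      = ∫ x in -(1 / 2 : ℝ)..1 / 2, 1 / max ‖(x : UnitAddCircle)‖ a := by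
        rw [← UnitAddCircle.intervalIntegral_preimage (-(1 / 2))]
        norm_num
    _ = 2 * ∫ x in (0 : ℝ)..1 / 2, 1 / max ‖(x : UnitAddCircle)‖ a :=
        integral_neg_to_self_of_even heven (hcont.intervalIntegrable _ _)
    _ ≤ 2 * ∫ x in (0 : ℝ)..1 / 2, 2 * (x + a)⁻¹ := by
        gcongr
        exact intervalIntegral.integral_mono_on (by norm_num) (hcont.intervalIntegrable _ _) hint
          hbound
    _ = 4 * Real.log ((1 / 2 + a) / a) := by
        rw [intervalIntegral.integral_const_mul,
          intervalIntegral.integral_comp_add_right (fun x : ℝ => x⁻¹), zero_add,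
          integral_inv_of_pos ha (by positivity)]
        ring
    _ ≤ 4 * Real.log (1 + 1 / a) := by
        gcongr
        rw [add_div, div_self ha.ne', add_comm]
        gcongr
        norm_num

lemma add_one_mul_le_tsum_of_antitone {u : ℕ → ℝ} (hu : Antitone u) (hsum : Summable u) (k : ℕ) :
    (k + 1) * u k ≤ ∑' n, u n := by
  have hnonneg := hu.le_of_tendsto hsum.tendsto_atTop_zero
  calc (k + 1) * u k = #(range (k + 1)) • u k := by simp
    _ ≤ ∑ n ∈ range (k + 1), u n :=
        card_nsmul_le_sum _ _ _ fun n hn => hu (Nat.lt_succ_iff.1 (mem_range.1 hn))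
    _ ≤ ∑' n, u n := hsum.sum_le_tsum _ fun n _ => hnonneg n

lemma summable_add_one_mul_pow_of_antitone {u : ℕ → ℝ} (hu : Antitone u) (hsum : Summable u)
    {p : ℕ} (hp : 2 ≤ p) : Summable fun k : ℕ => (k + 1) * u k ^ p := by
  have hnonneg := hu.le_of_tendsto hsum.tendsto_atTop_zero
  obtain ⟨q, rfl⟩ := Nat.exists_eq_add_of_le hp
  refine .of_nonneg_of_le (fun k => ?_) (fun k => ?_) (hsum.mul_left ((∑' n, u n) * u 0 ^ q))
  · have := hnonneg k
    positivity
  · calc (k + 1) * u k ^ (2 + q) = (k + 1) * u k * u k ^ q * u k := by ring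
      _ ≤ (∑' n, u n) * u 0 ^ q * u k := by
          have hk := hnonneg k
          gcongr
          · exact tsum_nonneg hnonneg
          · exact add_one_mul_le_tsum_of_antitone hu hsum k
          · exact hu k.zero_le

end RealLemmas

lemma lintegral_sum_comp_nsmul {G : Type*} [AddCommGroup G] [TopologicalSpace G]
    [IsTopologicalAddGroup G] [CompactSpace G] [DivisibleBy G ℤ] [MeasurableSpace G] [BorelSpace G]
    (μ : Measure G) [μ.IsAddHaarMeasure] {s : Finset ℕ} (hs : 0 ∉ s) {f : ℕ → G → ℝ≥0∞}
    (hf : ∀ n ∈ s, Measurable (f n)) :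
    ∫⁻ x, ∑ n ∈ s, f n (n • x) ∂μ = ∫⁻ x, ∑ n ∈ s, f n x ∂μ := by
  have hmp : ∀ n ∈ s, MeasurePreserving (fun x : G => n • x) μ μ := fun n hn => by
    simpa only [natCast_zsmul] using
      Measure.measurePreserving_zsmul μ (Int.natCast_ne_zero.2 (ne_of_mem_of_not_mem hn hs))
  calc ∫⁻ x, ∑ n ∈ s, f n (n • x) ∂μ = ∑ n ∈ s, ∫⁻ x, f n (n • x) ∂μ :=
        lintegral_finsetSum' _ fun n hn => ((hf n hn).comp (hmp n hn).measurable).aemeasurable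
    _ = ∑ n ∈ s, ∫⁻ x, f n x ∂μ :=
        sum_congr rfl fun n hn => (hmp n hn).lintegral_comp (hf n hn)
    _ = ∫⁻ x, ∑ n ∈ s, f n x ∂μ :=
        (lintegral_finsetSum' _ fun n hn => (hf n hn).aemeasurable).symm

lemma ae_tendsto_zero_of_tsum_lintegral_ne_top {α : Type*} [MeasurableSpace α] {μ : Measure α}
    {f : ℕ → α → ℝ≥0∞} (hf : ∀ k, AEMeasurable (f k) μ) (hsum : ∑' k, ∫⁻ x, f k x ∂μ ≠ ∞) :
    ∀ᵐ x ∂μ, Filter.Tendsto (fun k => f k x) Filter.atTop (nhds 0) := by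
  rw [← lintegral_tsum hf] at hsum
  filter_upwards [ae_lt_top' (.tsum hf) hsum] with x hx
  exact ENNReal.tendsto_atTop_zero_of_tsum_ne_top hx.ne

lemma quasiMeasurePreserving_mk_pi_Icc (ι : Type*) [Fintype ι] :
    Measure.QuasiMeasurePreserving (fun (α : ι → ℝ) i => (α i : UnitAddCircle))
      ((volume : Measure (ι → ℝ)).restrict (Set.univ.pi fun _ => Set.Icc 0 1)) volume := by
  have h := measurePreserving_pi _ _ fun _ : ι => UnitAddCircle.measurePreserving_mk 0
  rw [← Measure.restrict_pi_pi, zero_add, Measure.restrict_congr_set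
    Measure.pi_Ioc_ae_eq_pi_Icc] at h
  exact h.quasiMeasurePreserving

/-- The product `∏ i, ‖β i‖` of the distances of the coordinates of a point of the torus to `0`. -/
def prodNorm {ι : Type*} [Fintype ι] (β : UnitAddTorus ι) : ℝ := ∏ i, ‖β i‖

/-- The sum of `1 / x n` over those `1 ≤ n ≤ M` with `x n < T`; a term with `x n = 0`
contributes `0`. -/
def reciprocalSumBelow (M : ℕ) (T : ℝ) (x : ℕ → ℝ) : ℝ := ∑ n ∈ Icc 1 M with x n < T, 1 / x n

/-- The weight `1 / (B x)` on `[δ, T)`, penalised by `1` on `(-∞, δ)` and zero beyond `T`.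
Unlike `1 / (B x)` it has a finite mean along `x = n * prodNorm (n • β)`, and the two agree below
`T` as soon as the total weight is less than `1`. -/
def truncWeight (δ T B x : ℝ) : ℝ :=
  (Set.Ico δ T).indicator (fun x => 1 / x) x / B + (Set.Iio δ).indicator 1 x

section Truncation

variable {δ T B y : ℝ}

lemma sum_indicator_Ico_one_div_le (hy : 0 ≤ y) (hδ : 0 < δ) (hT : δ ≤ T) (M : ℕ) :
    ∑ n ∈ Icc 1 M, (Set.Ico δ T).indicator (fun x => 1 / x) (n * y)
      ≤ (1 + Real.log (T / δ)) * (1 / max y (δ / M)) := by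
  classical
  have hR : 1 ≤ T / δ := (one_le_div hδ).2 hT
  have hlog : 0 ≤ Real.log (T / δ) := Real.log_nonneg hR
  rw [sum_indicator_eq_sum_filter]
  set S : Finset ℕ := {n ∈ Icc 1 M | (n * y : ℝ) ∈ Set.Ico δ T} with hS
  have hmem : ∀ n ∈ S, (1 ≤ n ∧ n ≤ M) ∧ δ ≤ n * y ∧ n * y < T := fun n hn => by
    simpa [hS] using hn
  rcases S.eq_empty_or_nonempty with h | ⟨m, hm⟩
  · rw [h, sum_empty]
    positivity
  obtain ⟨⟨hm1, hmM⟩, hδm, -⟩ := hmem m hm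
  have hy' : 0 < y := pos_of_mul_pos_right (hδ.trans_le hδm) m.cast_nonneg
  have hδM : δ / M ≤ y := by
    rw [div_le_iff₀' (by exact_mod_cast hm1.trans hmM)]
    exact hδm.trans (by gcongr)
  have hratio : ∀ m ∈ S, ∀ n ∈ S, (n : ℝ) ≤ T / δ * m := fun m hm n hn => by
    refine le_of_mul_le_mul_right ?_ hy'
    calc n * y ≤ T / δ * δ := by
          rw [div_mul_cancel₀ _ hδ.ne']
          exact (hmem n hn).2.2.le
      _ ≤ T / δ * (m * y) := by
          gcongr
          exact (hmem m hm).2.1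
      _ = T / δ * m * y := (mul_assoc _ _ _).symm
  rw [max_eq_left hδM]
  calc ∑ n ∈ S, 1 / (n * y) = (∑ n ∈ S, 1 / (n : ℝ)) * (1 / y) := by
        simp_rw [sum_mul, one_div_mul_one_div]
    _ ≤ (1 + Real.log (T / δ)) * (1 / y) := by
        gcongr
        exact sum_one_div_le_one_add_log (by simp [hS]) hR hratio

lemma sum_indicator_Iio_one_le (hy : 0 ≤ y) (hδ : 0 < δ) {M : ℕ} (hM : 0 < M) :
    ∑ n ∈ Icc 1 M, (Set.Iio δ).indicator (1 : ℝ → ℝ) (n * y) ≤ δ * (1 / max y (δ / M)) := by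
  classical
  simp only [sum_indicator_eq_sum_filter, Set.mem_Iio, Pi.one_apply, sum_const, nsmul_eq_mul,
    mul_one]
  rw [mul_one_div, le_div_iff₀ (lt_max_of_lt_right (by positivity)),
    mul_max_of_nonneg _ _ (Nat.cast_nonneg _)]
  set S : Finset ℕ := {n ∈ Icc 1 M | (n * y : ℝ) < δ}
  refine max_le ?_ ?_
  · rcases S.eq_empty_or_nonempty with h | h
    · simp [h, hδ.le]
    have hsub : S ⊆ Icc 1 (S.max' h) := fun n hn =>
      mem_Icc.2 ⟨(mem_Icc.1 (mem_filter.1 hn).1).1, S.le_max' n hn⟩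
    calc (#S : ℝ) * y ≤ S.max' h * y := by
          gcongr
          simpa using card_le_card hsub
      _ ≤ δ := (mem_filter.1 (S.max'_mem h)).2.le
  · calc (#S : ℝ) * (δ / M) ≤ M * (δ / M) := by
          gcongr
          simpa using card_filter_le (Icc 1 M) _
      _ = δ := by field_simp

lemma truncWeight_nonneg (hδ : 0 < δ) (hB : 0 < B) (x : ℝ) : 0 ≤ truncWeight δ T B x :=
  add_nonneg
    (div_nonneg (Set.indicator_nonneg (fun _ hx => one_div_nonneg.2 (hδ.le.trans hx.1)) x) hB.le)
    (Set.indicator_nonneg (fun _ _ => zero_le_one) x)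

lemma measurable_truncWeight (δ T B : ℝ) : Measurable (truncWeight δ T B) :=
  (((measurable_const.div measurable_id).indicator measurableSet_Ico).div_const B).add
    (measurable_one.indicator measurableSet_Iio)

lemma sum_truncWeight_le (hy : 0 ≤ y) (hδ : 0 < δ) (hT : δ ≤ T) (hB : 0 < B) {M : ℕ}
    (hM : 0 < M) :
    ∑ n ∈ Icc 1 M, truncWeight δ T B (n * y)
      ≤ ((1 + Real.log (T / δ)) / B + δ) * (1 / max y (δ / M)) := by
  simp only [truncWeight]
  rw [sum_add_distrib, ← sum_div, add_mul, div_mul_eq_mul_div]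
  gcongr
  · exact sum_indicator_Ico_one_div_le hy hδ hT M
  · exact sum_indicator_Iio_one_le hy hδ hM

lemma reciprocalSumBelow_le_of_sum_truncWeight_lt_one {x : ℕ → ℝ} {M : ℕ} (hδ : 0 < δ) (hB : 0 < B)
    (h : ∑ n ∈ Icc 1 M, truncWeight δ T B (x n) < 1) : reciprocalSumBelow M T x ≤ B := by
  have hge : ∀ n ∈ Icc 1 M, δ ≤ x n := by
    intro n hn
    by_contra! hlt
    have hone : truncWeight δ T B (x n) = 1 := by simp [truncWeight, hlt, hlt.not_ge]
    exact h.not_ge <| hone.ge.trans <|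
      single_le_sum (f := fun n => truncWeight δ T B (x n))
        (fun i _ => truncWeight_nonneg hδ hB (x i)) hn
  have heq : ∑ n ∈ Icc 1 M, truncWeight δ T B (x n) = reciprocalSumBelow M T x / B := by
    rw [reciprocalSumBelow, sum_filter, sum_div]
    refine sum_congr rfl fun n hn => ?_
    simp [truncWeight, Set.indicator_apply, hge n hn, (hge n hn).not_gt]
  exact ((div_lt_one hB).1 (heq ▸ h)).le

lemma reciprocalSumBelow_mono {x : ℕ → ℝ} (hx : ∀ n, 0 ≤ x n) {M M' : ℕ} {T T' : ℝ}
    (hM : M ≤ M') (hT : T ≤ T') : reciprocalSumBelow M T x ≤ reciprocalSumBelow M' T' x := by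
  refine sum_le_sum_of_subset_of_nonneg (fun n hn => ?_) fun n _ _ => one_div_nonneg.2 (hx n)
  simp only [mem_filter, mem_Icc] at hn ⊢
  exact ⟨⟨hn.1.1, hn.1.2.trans hM⟩, hn.2.trans_le hT⟩

end Truncation

section Torus

variable {ι : Type*} [Fintype ι]

lemma prodNorm_nonneg (β : UnitAddTorus ι) : 0 ≤ prodNorm β :=
  prod_nonneg fun _ _ => norm_nonneg _

lemma continuous_prodNorm : Continuous (prodNorm (ι := ι)) := by
  unfold prodNorm
  fun_prop

lemma prodNorm_nsmul_coe (n : ℕ) (α : ι → ℝ) :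
    prodNorm (n • fun i => (α i : UnitAddCircle)) = ∏ i, nid (n * α i) := by
  refine prod_congr rfl fun i _ => ?_
  rw [Pi.smul_apply, ← AddCircle.coe_nsmul, UnitAddCircle.norm_eq, nsmul_eq_mul, nid]

lemma one_div_max_prodNorm_le {a : ℝ} (ha : 0 < a) (ha1 : a ≤ 1) (β : UnitAddTorus ι) :
    1 / max (prodNorm β) a ≤ ∏ i, 1 / max ‖β i‖ a := by
  have hnorm : ∀ i ∈ univ, ‖β i‖ ≤ 1 := fun i _ =>
    (AddCircle.norm_le_half_period 1 one_ne_zero).trans (by norm_num)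
  rw [prod_div_distrib, prod_const_one]
  exact one_div_le_one_div_of_le (prod_pos fun i _ => lt_max_of_lt_right ha)
    (prod_max_le_max_prod hnorm ha.le ha1)

lemma lintegral_one_div_max_prodNorm_le {a : ℝ} (ha : 0 < a) (ha1 : a ≤ 1) :
    ∫⁻ β : UnitAddTorus ι, ENNReal.ofReal (1 / max (prodNorm β) a)
      ≤ ENNReal.ofReal ((4 * Real.log (1 + 1 / a)) ^ Fintype.card ι) := by
  have hpos : ∀ x : UnitAddCircle, 0 < max ‖x‖ a := fun x => lt_max_of_lt_right ha
  have hcont : Continuous fun β : UnitAddTorus ι => ∏ i, 1 / max ‖β i‖ a :=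
    continuous_finsetProd _ fun i _ => continuous_const.div
      ((continuous_apply i).norm.max continuous_const) fun β => (hpos (β i)).ne'
  calc ∫⁻ β : UnitAddTorus ι, ENNReal.ofReal (1 / max (prodNorm β) a)
      ≤ ∫⁻ β : UnitAddTorus ι, ENNReal.ofReal (∏ i, 1 / max ‖β i‖ a) :=
        lintegral_mono fun β => ENNReal.ofReal_le_ofReal (one_div_max_prodNorm_le ha ha1 β)
    _ = ENNReal.ofReal (∫ β : UnitAddTorus ι, ∏ i, 1 / max ‖β i‖ a) :=
        (ofReal_integral_eq_lintegral_ofReal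
          (hcont.integrable_of_hasCompactSupport (.of_compactSpace _))
          (.of_forall fun β => prod_nonneg fun i _ => (one_div_pos.2 (hpos (β i))).le)).symm
    _ ≤ ENNReal.ofReal ((4 * Real.log (1 + 1 / a)) ^ Fintype.card ι) := by
        rw [integral_fintype_prod_volume_eq_pow (fun x : UnitAddCircle => 1 / max ‖x‖ a)]
        gcongr
        exact integral_one_div_max_norm_le ha

lemma lintegral_sum_truncWeight_le {δ T B : ℝ} (hδ : 0 < δ) (hδ1 : δ ≤ 1) (hT : δ ≤ T)
    (hB : 0 < B) {M : ℕ} (hM : 0 < M) :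
    ∫⁻ β : UnitAddTorus ι,
        ENNReal.ofReal (∑ n ∈ Icc 1 M, truncWeight δ T B (n * prodNorm (n • β)))
      ≤ ENNReal.ofReal
          (((1 + Real.log (T / δ)) / B + δ) * (4 * Real.log (1 + M / δ)) ^ Fintype.card ι) := by
  have hM1 : (1 : ℝ) ≤ M := by exact_mod_cast hM
  have hlog : 0 ≤ Real.log (T / δ) := Real.log_nonneg ((one_le_div hδ).2 hT)
  have hfactor : 0 ≤ (1 + Real.log (T / δ)) / B + δ := by positivity
  have hnonneg : ∀ x, 0 ≤ truncWeight δ T B x := truncWeight_nonneg hδ hB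
  have hmeas : ∀ n ∈ Icc 1 M, Measurable fun β : UnitAddTorus ι =>
      ENNReal.ofReal (truncWeight δ T B (n * prodNorm β)) := fun n _ =>
    ((measurable_truncWeight δ T B).comp
      (continuous_prodNorm.measurable.const_mul _)).ennreal_ofReal
  calc ∫⁻ β : UnitAddTorus ι,
        ENNReal.ofReal (∑ n ∈ Icc 1 M, truncWeight δ T B (n * prodNorm (n • β)))
      = ∫⁻ β : UnitAddTorus ι,
          ENNReal.ofReal (∑ n ∈ Icc 1 M, truncWeight δ T B (n * prodNorm β)) := by
        simp_rw [ENNReal.ofReal_sum_of_nonneg fun _ _ => hnonneg _]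
        exact lintegral_sum_comp_nsmul volume (by simp) hmeas
    _ ≤ ∫⁻ β : UnitAddTorus ι, ENNReal.ofReal ((1 + Real.log (T / δ)) / B + δ) *
          ENNReal.ofReal (1 / max (prodNorm β) (δ / M)) := by
        refine lintegral_mono fun β => ?_
        rw [← ENNReal.ofReal_mul hfactor]
        exact ENNReal.ofReal_le_ofReal (sum_truncWeight_le (prodNorm_nonneg β) hδ hT hB hM)
    _ ≤ _ := by
        rw [lintegral_const_mul' _ _ ENNReal.ofReal_ne_top, ENNReal.ofReal_mul hfactor]
        gcongr
        simpa only [one_div_div] using lintegral_one_div_max_prodNorm_le (ι := ι) (a := δ / M)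
          (by positivity) (div_le_one_of_le₀ (hδ1.trans hM1) (by positivity))

lemma ae_exists_forall_reciprocalSumBelow_le {M : ℕ → ℕ} {δ T B : ℕ → ℝ} (hM : ∀ k, 0 < M k)
    (hδ : ∀ k, 0 < δ k) (hδ1 : ∀ k, δ k ≤ 1) (hT : ∀ k, δ k ≤ T k) (hB : ∀ k, 0 < B k)
    (hsum : Summable fun k => ((1 + Real.log (T k / δ k)) / B k + δ k) *
      (4 * Real.log (1 + M k / δ k)) ^ Fintype.card ι) :
    ∀ᵐ β : UnitAddTorus ι, ∃ C : ℝ, ∀ k,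
      reciprocalSumBelow (M k) (T k) (fun n => n * prodNorm (n • β)) ≤ C * B k := by
  have hmeas : ∀ k, Measurable fun β : UnitAddTorus ι => ENNReal.ofReal
      (∑ n ∈ Icc 1 (M k), truncWeight (δ k) (T k) (B k) (n * prodNorm (n • β))) := fun k =>
    (Finset.measurable_fun_sum _ fun n _ => (measurable_truncWeight _ _ _).comp <|
      ((continuous_prodNorm.comp (continuous_const_smul n)).measurable.const_mul _)).ennreal_ofReal
  have hfin := ne_top_of_le_ne_top hsum.tsum_ofReal_ne_top <| ENNReal.tsum_le_tsum fun k =>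
    lintegral_sum_truncWeight_le (ι := ι) (hδ k) (hδ1 k) (hT k) (hB k) (hM k)
  filter_upwards [ae_tendsto_zero_of_tsum_lintegral_ne_top (fun k => (hmeas k).aemeasurable) hfin]
    with β hβ
  have hbdd : BddAbove (Set.range fun k =>
      reciprocalSumBelow (M k) (T k) (fun n => n * prodNorm (n • β)) / B k) := by
    refine Filter.IsBoundedUnder.bddAbove_range ⟨1, Filter.eventually_map.2 ?_⟩
    filter_upwards [hβ.eventually_lt_const one_pos] with k hk
    exact div_le_one_of_le₀ (reciprocalSumBelow_le_of_sum_truncWeight_lt_one (hδ k) (hB k)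
      (ENNReal.ofReal_lt_one.1 hk)) (hB k).le
  obtain ⟨C, hC⟩ := hbdd
  exact ⟨C, fun k => (div_le_iff₀ (hB k)).1 (hC ⟨k, rfl⟩)⟩

end Torus

section Scales

lemma log_one_add_floor_exp_div_le (a b d k : ℕ) :
    Real.log (1 + ⌊Real.exp (a * Real.exp k + b * k)⌋₊ / Real.exp (-(k * (d + 1))))
      ≤ (a + b + d + 2) * Real.exp k := by
  set u : ℝ := a * Real.exp k + b * k + k * (d + 1)
  have hk : k + 1 ≤ Real.exp k := Real.add_one_le_exp k
  have hu : 1 + u ≤ (a + b + d + 2) * Real.exp k := by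
    calc 1 + u = 1 + k + a * Real.exp k + b * k + d * k := by ring
      _ ≤ Real.exp k + Real.exp k + a * Real.exp k + b * Real.exp k + d * Real.exp k := by
          gcongr <;> linarith
      _ = (a + b + d + 2) * Real.exp k := by ring
  rw [Real.log_le_iff_le_exp (by positivity)]
  calc 1 + (⌊Real.exp (a * Real.exp k + b * k)⌋₊ : ℝ) / Real.exp (-(k * (d + 1)))
      ≤ 1 + Real.exp (a * Real.exp k + b * k) / Real.exp (-(k * (d + 1))) := by
        gcongr
        exact Nat.floor_le (Real.exp_pos _).le
    _ = 1 + Real.exp u := by rw [← Real.exp_sub, sub_neg_eq_add]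
    _ ≤ 2 * Real.exp u := by linarith [Real.one_le_exp (show 0 ≤ u by positivity)]
    _ ≤ Real.exp 1 * Real.exp u := by
        gcongr
        exact Real.exp_one_gt_two.le
    _ ≤ Real.exp ((a + b + d + 2) * Real.exp k) := by
        rw [← Real.exp_add]
        gcongr

lemma summable_truncation_error (a b d s : ℕ) {ψ : ℕ → ℝ} (hψ : ∀ k, 0 < ψ k)
    (hsum : Summable fun k : ℕ => (k + 1) / ψ k) :
    Summable fun k : ℕ =>
      ((1 + Real.log (Real.exp (k * s) / Real.exp (-(k * (d + 1))))) / (Real.exp k ^ d * ψ k)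
          + Real.exp (-(k * (d + 1)))) *
        (4 * Real.log (1 + ⌊Real.exp (a * Real.exp k + b * k)⌋₊ /
          Real.exp (-(k * (d + 1))))) ^ d := by
  have hwindow : ∀ k : ℕ,
      Real.log (Real.exp (k * s) / Real.exp (-(k * (d + 1)))) = (s + d + 1) * k := fun k => by
    rw [← Real.exp_sub, Real.log_exp]
    ring
  have hlog : ∀ k : ℕ, 0 ≤ Real.log (1 + ⌊Real.exp (a * Real.exp k + b * k)⌋₊ /
      Real.exp (-(k * (d + 1)))) := fun k =>
    Real.log_nonneg (le_add_of_nonneg_right (by positivity))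
  have hcancel : ∀ k : ℕ, Real.exp (-(k * (d + 1))) * Real.exp k ^ d = Real.exp (-k) := fun k => by
    rw [← Real.exp_nat_mul, ← Real.exp_add]
    ring_nf
  simp only [hwindow]
  refine .of_nonneg_of_le (fun k => ?_) (fun k => ?_)
    (((hsum.mul_left ((s : ℝ) + d + 1)).add Real.summable_exp_neg_nat).mul_left
      ((4 * ((a : ℝ) + b + d + 2)) ^ d))
  · have := hψ k
    have := hlog k
    positivity
  · have hψk := hψ k
    have hlogk := hlog k
    calc _ ≤ ((1 + (s + d + 1) * k) / (Real.exp k ^ d * ψ k) + Real.exp (-(k * (d + 1)))) *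
          (4 * ((a + b + d + 2) * Real.exp k)) ^ d := by
          gcongr
          exact log_one_add_floor_exp_div_le a b d k
      _ = (4 * (a + b + d + 2)) ^ d * ((1 + (s + d + 1) * k) / ψ k
            + Real.exp (-(k * (d + 1))) * Real.exp k ^ d) := by
          rw [← mul_assoc, mul_pow]
          field_simp
      _ = (4 * (a + b + d + 2)) ^ d * ((1 + (s + d + 1) * k) / ψ k + Real.exp (-k)) := by
          rw [hcancel]
      _ ≤ (4 * (a + b + d + 2)) ^ d * ((s + d + 1) * ((k + 1) / ψ k) + Real.exp (-k)) := by
          rw [← mul_div_assoc]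
          gcongr
          have : (0 : ℝ) ≤ s + d := by positivity
          linarith

lemma ae_exists_forall_reciprocalSumBelow_exp_le {ι : Type*} [Fintype ι] (a b s : ℕ) {ψ : ℕ → ℝ}
    (hψ : ∀ k, 0 < ψ k) (hsum : Summable fun k : ℕ => (k + 1) / ψ k) :
    ∀ᵐ β : UnitAddTorus ι, ∃ C : ℝ, ∀ k : ℕ,
      reciprocalSumBelow ⌊Real.exp (a * Real.exp k + b * k)⌋₊ (Real.exp (k * s))
        (fun n => n * prodNorm (n • β)) ≤ C * (Real.exp k ^ Fintype.card ι * ψ k) := by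
  refine ae_exists_forall_reciprocalSumBelow_le
    (δ := fun k => Real.exp (-(k * (Fintype.card ι + 1)))) (fun k => ?_) (fun k => by positivity)
    (fun k => Real.exp_le_one_iff.2 (neg_nonpos.2 (by positivity)))
    (fun k => Real.exp_le_exp.2 ((neg_nonpos.2 (by positivity)).trans (by positivity)))
    (fun k => mul_pos (by positivity) (hψ k)) (summable_truncation_error a b _ s hψ hsum)
  exact Nat.floor_pos.2 (Real.one_le_exp (by positivity))

lemma log_le_exp_ceil_log_log {X : ℝ} (hX : 1 < X) :
    Real.log X ≤ Real.exp ⌈Real.log (Real.log X)⌉₊ :=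
  (Real.log_le_iff_le_exp (Real.log_pos hX)).1 (Nat.le_ceil _)

lemma exp_ceil_log_log_le {X : ℝ} (hX : Real.exp 1 ≤ X) :
    Real.exp ⌈Real.log (Real.log X)⌉₊ ≤ Real.exp 1 * Real.log X := by
  have hlog : 1 ≤ Real.log X := (Real.le_log_iff_exp_le ((Real.exp_pos 1).trans_le hX)).2 hX
  calc Real.exp ⌈Real.log (Real.log X)⌉₊ ≤ Real.exp (Real.log (Real.log X) + 1) :=
        Real.exp_le_exp.2 (Nat.ceil_lt_add_one (Real.log_nonneg hlog)).le
    _ = Real.exp 1 * Real.log X := by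
        rw [Real.exp_add, Real.exp_log (zero_lt_one.trans_le hlog), mul_comm]

lemma reciprocalSumBelow_le_of_exp_scale {x : ℕ → ℝ} (hx : ∀ n, 0 ≤ x n) (a b s : ℕ) {X : ℝ}
    (hX : 1 < X) {k : ℕ} (hk : Real.log X ≤ Real.exp k) :
    reciprocalSumBelow ⌊X ^ a * Real.log X ^ b⌋₊ (Real.log X ^ s) x ≤
      reciprocalSumBelow ⌊Real.exp (a * Real.exp k + b * k)⌋₊ (Real.exp (k * s)) x := by
  have hX0 : 0 < X := zero_lt_one.trans hX
  have hlog : 0 < Real.log X := Real.log_pos hX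
  have hXk : X ≤ Real.exp (Real.exp k) := (Real.log_le_iff_le_exp hX0).1 hk
  refine reciprocalSumBelow_mono hx (Nat.floor_le_floor ?_) ?_
  · rw [Real.exp_add, Real.exp_nat_mul, Real.exp_nat_mul]
    gcongr
  · rw [mul_comm, Real.exp_nat_mul]
    gcongr

end Scales

theorem stmt_12_general {ι : Type*} [Fintype ι] (a b s : ℕ) {ψ : ℕ → ℝ} (hψ : ∀ k, 0 < ψ k)
    (hsum : Summable fun k : ℕ => (k + 1) / ψ k) :
    ∀ᵐ α ∂((volume : Measure (ι → ℝ)).restrict (Set.univ.pi fun _ => Set.Icc 0 1)),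
      ∃ C : ℝ, ∀ X : ℝ, Real.exp 1 ≤ X →
        ∑ n ∈ (Icc 1 ⌊X ^ a * Real.log X ^ b⌋₊).filter
            (fun n : ℕ => (n : ℝ) * ∏ i, nid (n * α i) < Real.log X ^ s),
            1 / ((n : ℝ) * ∏ i, nid (n * α i)) ≤
          C * Real.log X ^ Fintype.card ι * ψ ⌈Real.log (Real.log X)⌉₊ := by
  filter_upwards [(quasiMeasurePreserving_mk_pi_Icc ι).ae
    (ae_exists_forall_reciprocalSumBelow_exp_le a b s hψ hsum)] with α ⟨C, hC⟩
  simp only [prodNorm_nsmul_coe] at hC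
  refine ⟨|C| * Real.exp 1 ^ Fintype.card ι, fun X hX => ?_⟩
  have hX1 : 1 < X := (Real.one_lt_exp_iff.2 one_pos).trans_le hX
  have hnonneg : ∀ n : ℕ, 0 ≤ n * ∏ i, nid (n * α i) := fun n =>
    mul_nonneg n.cast_nonneg (prod_nonneg fun i _ => abs_nonneg _)
  set k := ⌈Real.log (Real.log X)⌉₊
  have hψk := hψ k
  calc _ ≤ _ := reciprocalSumBelow_le_of_exp_scale hnonneg a b s hX1 (log_le_exp_ceil_log_log hX1)
    _ ≤ C * (Real.exp k ^ Fintype.card ι * ψ k) := hC k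
    _ ≤ |C| * ((Real.exp 1 * Real.log X) ^ Fintype.card ι * ψ k) := by
        gcongr
        · exact le_abs_self C
        · exact exp_ceil_log_log_le hX
    _ = |C| * Real.exp 1 ^ Fintype.card ι * Real.log X ^ Fintype.card ι * ψ k := by
        rw [mul_pow]
        ring

/-- For a.e. `α ∈ [0,1]^d`: the sum of `1/(n·∏‖nα_i‖)` over `1 ≤ n ≤ N²(log N)²` with
`n·∏‖nα_i‖ < (log N)^s` is at most `C·(log N)^d·φ(log log N)^{d+1}`. -/
theorem stmt_12 (d : ℕ) (hd : 1 ≤ d) (s : ℕ) (φ : ℕ → ℝ) (hφpos : ∀ n, 0 < φ n)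
    (hφmono : Monotone φ) (hφsum : Summable fun n => 1 / φ n) :
    ∀ᵐ α ∂((volume : Measure (Fin d → ℝ)).restrict
        (Set.univ.pi fun _ : Fin d => Set.Icc (0 : ℝ) 1)),
      ∃ C : ℝ, ∀ N : ℕ, 3 ≤ N →
        ∑ n ∈ (Finset.Icc 1 (Nat.floor ((N : ℝ) ^ 2 * Real.log N ^ 2))).filter
            (fun n : ℕ => (n : ℝ) * ∏ i : Fin d, nid ((n : ℝ) * α i) < Real.log N ^ s),
            1 / ((n : ℝ) * ∏ i : Fin d, nid ((n : ℝ) * α i)) ≤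
          C * Real.log N ^ d * φ (Nat.ceil (Real.log (Real.log N))) ^ (d + 1) := by
  have hanti : Antitone fun n => 1 / φ n := fun m n hmn =>
    one_div_le_one_div_of_le (hφpos m) (hφmono hmn)
  have hsum : Summable fun k : ℕ => (k + 1) / φ k ^ (d + 1) := by
    simpa only [one_div_pow, mul_one_div] using
      summable_add_one_mul_pow_of_antitone hanti hφsum (Nat.succ_le_succ hd)
  filter_upwards [stmt_12_general 2 2 s (fun k => pow_pos (hφpos k) (d + 1)) hsum] with α ⟨C, hC⟩
  rw [Fintype.card_fin] at hC
  exact ⟨C, fun N hN => hC N (Real.exp_one_lt_three.le.trans (by exact_mod_cast hN))⟩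
end
end

section
/- Let d ≥ 1 and let φ : ℕ → (0,∞) be a positive increasing function with ∑_{n=1}^∞ 1/φ(n) < ∞. For Lebesgue-almost every α = (α₁,…,α_d) ∈ [0,1]^d there is a constant C(α,φ) such that for every integer p ≥ 1 and every integer v ≥ 1, the cardinality of S_α(p,v) is at most C(α,φ)·2^v·φ(v). -/
open MeasureTheory Finset

noncomputable section

/-!
Multiplication by `n ≠ 0` preserves Haar measure on the torus, so the law of `∏ ‖n α i‖` does not
depend on `n`. Bounding the probability of a small norm in one coordinate by a power `u ^ s`, and
integrating `∏ ‖α i‖ ^ (-s)` over the others, gives `P(∏ ‖α i‖ < t) ≲ t ^ s (1 - s) ^ (1 - d)`; the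
choice `1 - s = 1 / L` with `L ≥ log (1 / t)` turns this into `t L ^ (d - 1)`. Hence the number of
`n` with `exp (exp q) ≤ n < exp (exp (q + 1))` and `n ∏ ‖n α i‖ < 2 ^ v / ((log n) ^ d w)` has
expectation `O(2 ^ v / w)`: summing `1 / n` restores the missing factor of `log n`. Divided by
`2 ^ v φ v`, these expectations are summable over `q` and `v` as soon as the weights `w = w q` have
summable reciprocals, so the counts themselves, divided by `2 ^ v φ v`, are almost surely summable
and in particular bounded. Capping the weights at `exp q` keeps `log (1 / t) = O(exp q)`.
-/

open scoped ENNReal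

section Measure

variable {ι X Y Ω : Type*} [MeasurableSpace X] [MeasurableSpace Y] [MeasurableSpace Ω]

lemma lintegral_pi_prod_eq_prod [Fintype ι] {E : ι → Type*} [∀ i, MeasurableSpace (E i)]
    (μ : ∀ i, Measure (E i)) [∀ i, IsProbabilityMeasure (μ i)] {f : ∀ i, E i → ℝ≥0∞}
    (hf : ∀ i, Measurable (f i)) :
    ∫⁻ x, ∏ i, f i (x i) ∂Measure.pi μ = ∏ i, ∫⁻ x, f i x ∂μ i := by
  rw [ProbabilityTheory.lintegral_prod_eq_prod_lintegral_of_indepFun univ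
    (fun i (x : ∀ j, E j) => f i (x i))
    (ProbabilityTheory.iIndepFun_pi fun i => (hf i).aemeasurable)
    fun i => (hf i).comp (measurable_pi_apply i)]
  exact prod_congr rfl fun i _ => (measurePreserving_eval μ i).lintegral_comp (hf i)

lemma measure_prod_mul_lt_le {μ : Measure X} [SFinite μ] {ν : Measure Y} [SFinite ν]
    {f : X → ℝ≥0∞} {g : Y → ℝ≥0∞} (hf : Measurable f) (hg : Measurable g) (hf_top : ∀ x, f x ≠ ∞)
    (hg_top : ∀ y, g y ≠ ∞) {C : ℝ≥0∞} {s : ℝ} (hs : 0 ≤ s)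
    (hμ : ∀ u, μ {x | f x < u} ≤ (C * u) ^ s) (t : ℝ≥0∞) :
    μ.prod ν {z | f z.1 * g z.2 < t} ≤ (C * t) ^ s * ∫⁻ y, g y ^ (-s) ∂ν := by
  rw [Measure.prod_apply_symm (measurableSet_lt (by fun_prop) measurable_const),
    ← lintegral_const_mul _ (hg.pow_const _)]
  refine lintegral_mono fun y => ?_
  have hsub : {x | f x * g y < t} ⊆ {x | f x < t / g y} := fun x (hx : f x * g y < t) => by
    rcases eq_or_ne (g y) 0 with h0 | h0
    · have ht : t ≠ 0 := hx.ne_bot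
      simpa only [Set.mem_ofPred_eq, h0, ENNReal.div_zero ht] using (hf_top x).lt_top
    · exact (ENNReal.lt_div_iff_mul_lt (.inl h0) (.inl (hg_top y))).2 hx
  calc μ {x | f x * g y < t}
      ≤ (C * (t / g y)) ^ s := (measure_mono hsub).trans (hμ _)
    _ = (C * t) ^ s * g y ^ (-s) := by
        rw [← mul_div_assoc, ENNReal.div_rpow_of_nonneg _ _ hs, ENNReal.rpow_neg, div_eq_mul_inv]

lemma ae_exists_forall_le_ofReal_mul [Countable ι] {μ : Measure Ω} {f : ι → Ω → ℝ≥0∞}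
    {b r : ι → ℝ} (hf : ∀ i, AEMeasurable (f i) μ) (hb : ∀ i, 0 < b i) (hr : Summable r)
    (hfr : ∀ i, ∫⁻ ω, f i ω ∂μ ≤ ENNReal.ofReal (b i * r i)) :
    ∀ᵐ ω ∂μ, ∃ C : ℝ, ∀ i, f i ω ≤ ENNReal.ofReal (C * b i) := by
  have hbpos : ∀ i, 0 < ENNReal.ofReal (b i) := fun i => ENNReal.ofReal_pos.2 (hb i)
  have hmeas : ∀ i, AEMeasurable (fun ω => f i ω / ENNReal.ofReal (b i)) μ := fun i =>
    (hf i).div_const _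
  have hint : ∫⁻ ω, ∑' i, f i ω / ENNReal.ofReal (b i) ∂μ ≠ ∞ := by
    rw [lintegral_tsum hmeas]
    refine ne_top_of_le_ne_top hr.tsum_ofReal_ne_top (ENNReal.tsum_le_tsum fun i => ?_)
    simp only [div_eq_mul_inv]
    rw [lintegral_mul_const'' _ (hf i), ← div_eq_mul_inv]
    refine ENNReal.div_le_of_le_mul' ((hfr i).trans_eq ?_)
    exact ENNReal.ofReal_mul (hb i).le
  filter_upwards [ae_lt_top' (AEMeasurable.tsum hmeas) hint] with ω hω
  refine ⟨(∑' i, f i ω / ENNReal.ofReal (b i)).toReal, fun i => ?_⟩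
  rw [ENNReal.ofReal_mul ENNReal.toReal_nonneg, ENNReal.ofReal_toReal hω.ne]
  exact (ENNReal.div_le_iff (hbpos i).ne' ENNReal.ofReal_ne_top).1
    (ENNReal.le_tsum (f := fun i => f i ω / ENNReal.ofReal (b i)) i)

lemma lintegral_Ioc_comp_abs {a : ℝ} (ha : 0 ≤ a) (g : ℝ → ℝ≥0∞) :
    ∫⁻ x in Set.Ioc (-a) a, g |x| = 2 * ∫⁻ x in Set.Ioc 0 a, g x := by
  have hpos : ∫⁻ x in Set.Ioc 0 a, g |x| = ∫⁻ x in Set.Ioc 0 a, g x :=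
    setLIntegral_congr_fun measurableSet_Ioc fun x hx => by simp only [abs_of_pos hx.1]
  have hneg : ∫⁻ x in Set.Ioc (-a) 0, g |x| = ∫⁻ x in Set.Ioc 0 a, g |x| := by
    have h := (Measure.measurePreserving_neg (volume : Measure ℝ)).setLIntegral_comp_preimage_emb
      (MeasurableEquiv.neg ℝ).measurableEmbedding (fun x => g |x|) (Set.Ioc 0 a)
    simpa only [Set.neg_preimage, Set.neg_Ioc, abs_neg, neg_zero,
      restrict_Ico_eq_restrict_Ioc] using h
  rw [← Set.Ioc_union_Ioc_eq_Ioc (neg_nonpos.2 ha) ha,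
    lintegral_union measurableSet_Ioc (Set.Ioc_disjoint_Ioc_of_le le_rfl), hneg, hpos, two_mul]

lemma lintegral_Ioc_zero_rpow {a r : ℝ} (ha : 0 ≤ a) (hr : -1 < r) :
    ∫⁻ x in Set.Ioc 0 a, ENNReal.ofReal x ^ r = ENNReal.ofReal (a ^ (r + 1) / (r + 1)) := by
  have hr0 : r + 1 ≠ 0 := by linarith
  have hint : ∫ x in (0 : ℝ)..a, x ^ r = a ^ (r + 1) / (r + 1) := by
    rw [integral_rpow (.inl hr), Real.zero_rpow hr0, sub_zero]
  rw [← hint, intervalIntegral.integral_of_le ha, ofReal_integral_eq_lintegral_ofReal]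
  · exact setLIntegral_congr_fun measurableSet_Ioc fun x hx => ENNReal.ofReal_rpow_of_pos hx.1
  · exact (intervalIntegrable_iff_integrableOn_Ioc_of_le ha).1
      (intervalIntegral.intervalIntegrable_rpow' hr)
  · exact (ae_restrict_iff' measurableSet_Ioc).2
      (.of_forall fun x hx => Real.rpow_nonneg hx.1.le _)

end Measure

section Torus

instance inst_s13 : IsProbabilityMeasure (volume : Measure UnitAddCircle) :=
  ⟨UnitAddCircle.measure_univ⟩

lemma volume_unitAddCircle_enorm_lt_le {s : ℝ} (hs0 : 0 ≤ s) (hs1 : s ≤ 1) (u : ℝ≥0∞) :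
    volume {x : UnitAddCircle | ‖x‖ₑ < u} ≤ (2 * u) ^ s := by
  rcases le_total 1 (2 * u) with h | h
  · exact prob_le_one.trans ((ENNReal.one_rpow s).symm.trans_le (ENNReal.rpow_le_rpow h hs0))
  have hu : u ≠ ∞ := by
    rintro rfl
    simp at h
  have hsub : {x : UnitAddCircle | ‖x‖ₑ < u} ⊆ Metric.closedBall 0 u.toReal := fun x hx => by
    rw [mem_closedBall_zero_iff, ← toReal_enorm]
    exact ENNReal.toReal_mono hu (le_of_lt hx)
  calc volume {x : UnitAddCircle | ‖x‖ₑ < u}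
      ≤ ENNReal.ofReal (min 1 (2 * u.toReal)) :=
        (measure_mono hsub).trans_eq (AddCircle.volume_closedBall 1 _)
    _ ≤ ENNReal.ofReal (2 * u.toReal) := ENNReal.ofReal_le_ofReal (min_le_right _ _)
    _ = 2 * u := by
        rw [ENNReal.ofReal_mul zero_le_two, ENNReal.ofReal_ofNat, ENNReal.ofReal_toReal hu]
    _ ≤ (2 * u) ^ s := by
        simpa only [ENNReal.rpow_one] using ENNReal.rpow_le_rpow_of_exponent_ge h hs1

lemma lintegral_unitAddCircle_enorm_rpow_neg_le {s : ℝ} (hs : s < 1) :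
    ∫⁻ x : UnitAddCircle, ‖x‖ₑ ^ (-s) ≤ ENNReal.ofReal (2 / (1 - s)) := by
  have hs' : 0 < 1 - s := sub_pos.2 hs
  have hnorm : ∀ x ∈ Set.Ioc (-(1 / 2) : ℝ) (1 / 2),
      ‖(x : UnitAddCircle)‖ₑ = ENNReal.ofReal |x| := fun x hx => by
    rw [← ofReal_norm, (AddCircle.norm_coe_eq_abs_iff 1 one_ne_zero).2]
    rw [abs_one, abs_le]
    exact ⟨hx.1.le, hx.2⟩
  calc ∫⁻ x : UnitAddCircle, ‖x‖ₑ ^ (-s)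
      = ∫⁻ x in Set.Ioc (-(1 / 2) : ℝ) (1 / 2), ‖(x : UnitAddCircle)‖ₑ ^ (-s) := by
        rw [← UnitAddCircle.lintegral_preimage (-(1 / 2))]
        norm_num
    _ = ∫⁻ x in Set.Ioc (-(1 / 2) : ℝ) (1 / 2), ENNReal.ofReal |x| ^ (-s) :=
        setLIntegral_congr_fun measurableSet_Ioc fun x hx => by simp only [hnorm x hx]
    _ = 2 * ENNReal.ofReal ((1 / 2) ^ (1 - s) / (1 - s)) := by
        rw [lintegral_Ioc_comp_abs (by norm_num) fun x => ENNReal.ofReal x ^ (-s),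
          lintegral_Ioc_zero_rpow (by norm_num) (by linarith), neg_add_eq_sub]
    _ ≤ 2 * ENNReal.ofReal (1 / (1 - s)) := by
        gcongr
        exact Real.rpow_le_one (by norm_num) (by norm_num) hs'.le
    _ = ENNReal.ofReal (2 / (1 - s)) := by
        rw [← ENNReal.ofReal_ofNat 2, ← ENNReal.ofReal_mul zero_le_two, mul_one_div]

lemma volume_torus_prod_enorm_lt_le_rpow (k : ℕ) {s : ℝ} (hs0 : 0 ≤ s) (hs1 : s < 1) (t : ℝ≥0∞) :
    volume {β : Fin (k + 1) → UnitAddCircle | ∏ i, ‖β i‖ₑ < t} ≤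
      (2 * t) ^ s * ENNReal.ofReal (2 / (1 - s)) ^ k := by
  have hsplit := (volume_preserving_piFinSuccAbove (fun _ : Fin (k + 1) => UnitAddCircle)
    0).measure_preimage_equiv {z | ‖z.1‖ₑ * ∏ j, ‖z.2 j‖ₑ < t}
  have hpre : {β : Fin (k + 1) → UnitAddCircle | ∏ i, ‖β i‖ₑ < t} =
      MeasurableEquiv.piFinSuccAbove (fun _ => UnitAddCircle) 0 ⁻¹'
        {z | ‖z.1‖ₑ * ∏ j, ‖z.2 j‖ₑ < t} := by
    ext β
    simp [Fin.prod_univ_succ, Fin.tail]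
  have hrpow : ∀ y : Fin k → UnitAddCircle,
      (∏ j, ‖y j‖ₑ) ^ (-s) = ∏ j, ‖y j‖ₑ ^ (-s) := fun y =>
    (ENNReal.prod_rpow_of_ne_top (fun _ _ => enorm_ne_top) _).symm
  rw [hpre, hsplit]
  calc _ ≤ (2 * t) ^ s * ∫⁻ y : Fin k → UnitAddCircle, (∏ j, ‖y j‖ₑ) ^ (-s) :=
        measure_prod_mul_lt_le measurable_enorm (by fun_prop) (fun _ => enorm_ne_top)
          (fun y => ENNReal.prod_ne_top fun _ _ => enorm_ne_top) hs0
          (volume_unitAddCircle_enorm_lt_le hs0 hs1.le) t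
    _ = (2 * t) ^ s * (∫⁻ x : UnitAddCircle, ‖x‖ₑ ^ (-s)) ^ k := by
        simp_rw [hrpow]
        rw [volume_pi, lintegral_pi_prod_eq_prod (fun _ => volume) (f := fun _ x => ‖x‖ₑ ^ (-s))
          fun _ => by fun_prop, prod_const, card_univ, Fintype.card_fin]
    _ ≤ _ := by
        gcongr
        exact lintegral_unitAddCircle_enorm_rpow_neg_le hs1

lemma volume_torus_prod_enorm_lt_le (k : ℕ) {t L : ℝ} (hL : 1 ≤ L) (ht : Real.exp (-L) ≤ t) :
    volume {β : Fin (k + 1) → UnitAddCircle | ∏ i, ‖β i‖ₑ < ENNReal.ofReal t} ≤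
      ENNReal.ofReal (2 * Real.exp 1 * t * (2 * L) ^ k) := by
  have hL0 : 0 < L := by linarith
  have ht0 : 0 < t := (Real.exp_pos _).trans_le ht
  have hs0 : 0 ≤ 1 - L⁻¹ := sub_nonneg.2 (inv_le_one_of_one_le₀ hL)
  have hs1 : 1 - L⁻¹ < 1 := sub_lt_self _ (inv_pos.2 hL0)
  have htpow : t ^ (1 - L⁻¹) ≤ Real.exp 1 * t :=
    calc t ^ (1 - L⁻¹) = t⁻¹ ^ L⁻¹ * t := by
          rw [Real.rpow_sub ht0, Real.rpow_one, Real.inv_rpow ht0.le, div_eq_inv_mul]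
      _ ≤ Real.exp L ^ L⁻¹ * t := by
          gcongr
          rwa [inv_le_comm₀ ht0 (Real.exp_pos _), ← Real.exp_neg]
      _ = Real.exp 1 * t := by rw [← Real.exp_mul, mul_inv_cancel₀ hL0.ne']
  calc _ ≤ (2 * ENNReal.ofReal t) ^ (1 - L⁻¹) * ENNReal.ofReal (2 / (1 - (1 - L⁻¹))) ^ k :=
        volume_torus_prod_enorm_lt_le_rpow k hs0 hs1 _
    _ = ENNReal.ofReal (2 ^ (1 - L⁻¹) * t ^ (1 - L⁻¹) * (2 * L) ^ k) := by
        rw [sub_sub_cancel, div_inv_eq_mul, ← ENNReal.ofReal_ofNat 2,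
          ← ENNReal.ofReal_mul zero_le_two, ENNReal.ofReal_rpow_of_pos (by positivity),
          Real.mul_rpow zero_le_two ht0.le, ← ENNReal.ofReal_pow (by positivity),
          ← ENNReal.ofReal_mul (by positivity)]
    _ ≤ _ := by
        rw [mul_assoc 2 (Real.exp 1)]
        gcongr
        exact Real.rpow_le_self_of_one_le one_le_two hs1.le

lemma measurePreserving_natCast_mul_coe_torus {ι : Type*} [Fintype ι] {n : ℕ} (hn : n ≠ 0) :
    MeasurePreserving (fun (α : ι → ℝ) i => ((n * α i : ℝ) : UnitAddCircle))
      (volume.restrict (Set.Icc 0 1)) volume := by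
  have hcircle : MeasurePreserving (fun x : ℝ => ((n * x : ℝ) : UnitAddCircle))
      (volume.restrict (Set.Icc 0 1)) volume := by
    have hcoe : MeasurePreserving ((↑) : ℝ → UnitAddCircle) (volume.restrict (Set.Icc 0 1))
        volume := by
      simpa only [zero_add, restrict_Ioc_eq_restrict_Icc] using
        UnitAddCircle.measurePreserving_mk 0
    convert (Measure.measurePreserving_zsmul (volume : Measure UnitAddCircle)
      (Int.natCast_ne_zero.2 hn)).comp hcoe using 2 with x
    rw [Function.comp_apply, ← AddCircle.coe_zsmul, zsmul_eq_mul, Int.cast_natCast]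
  rw [← Set.pi_univ_Icc, volume_pi, volume_pi, Measure.restrict_pi_pi]
  exact measurePreserving_pi _ _ fun _ => hcircle

end Torus

lemma nid_eq_norm_coe (y : ℝ) : nid y = ‖(y : UnitAddCircle)‖ := by
  rw [UnitAddCircle.norm_eq, nid]

lemma nid_nonneg (y : ℝ) : 0 ≤ nid y := abs_nonneg _

lemma measurable_nid : Measurable nid := by
  simp only [funext nid_eq_norm_coe]
  exact measurable_norm.comp AddCircle.measurable_mk'

lemma volume_cube_prod_nid_lt_le (k : ℕ) {n : ℕ} (hn : n ≠ 0) {t L : ℝ} (hL : 1 ≤ L)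
    (ht : Real.exp (-L) ≤ t) :
    volume.restrict (Set.Icc 0 1) {α : Fin (k + 1) → ℝ | ∏ i, nid (n * α i) < t} ≤
      ENNReal.ofReal (2 * Real.exp 1 * t * (2 * L) ^ k) := by
  have hpre : {α : Fin (k + 1) → ℝ | ∏ i, nid (n * α i) < t} =
      (fun α i => ((n * α i : ℝ) : UnitAddCircle)) ⁻¹'
        {β | ∏ i, ‖β i‖ₑ < ENNReal.ofReal t} := by
    ext α
    have hprod : 0 ≤ ∏ i, nid (n * α i) := prod_nonneg fun i _ => nid_nonneg _
    simp only [Set.mem_preimage, Set.mem_ofPred_eq, ← ofReal_norm, ← nid_eq_norm_coe]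
    rw [← ENNReal.ofReal_prod_of_nonneg fun i _ => nid_nonneg _,
      ENNReal.ofReal_lt_ofReal_iff_of_nonneg hprod]
  rw [hpre, (measurePreserving_natCast_mul_coe_torus hn).measure_preimage
    (measurableSet_lt (by fun_prop) measurable_const).nullMeasurableSet]
  exact volume_torus_prod_enorm_lt_le k hL ht

section Counting

variable {ι : Type*} [Fintype ι]

/-- The set of `1 ≤ n ≤ N` at which the multiplicative Diophantine quantity `n ∏ ‖n α i‖` is
less than `δ`. -/
def smallProducts (N : ℕ) (δ : ℝ) (α : ι → ℝ) : Finset ℕ :=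
  {n ∈ Icc 1 N | n * ∏ i, nid (n * α i) < δ}

lemma measurableSet_mul_prod_nid_lt (n : ℕ) (δ : ℝ) :
    MeasurableSet {α : ι → ℝ | n * ∏ i, nid (n * α i) < δ} := by
  have := measurable_nid
  exact measurableSet_lt (by fun_prop) measurable_const

lemma card_smallProducts_eq_sum_indicator (N : ℕ) (δ : ℝ) (α : ι → ℝ) :
    (#(smallProducts N δ α) : ℝ≥0∞) =
      ∑ n ∈ Icc 1 N, {α : ι → ℝ | n * ∏ i, nid (n * α i) < δ}.indicator 1 α := by
  simp [smallProducts, Set.indicator]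

lemma measurable_card_smallProducts (N : ℕ) (δ : ℝ) :
    Measurable fun α : ι → ℝ => (#(smallProducts N δ α) : ℝ≥0∞) := by
  simp_rw [card_smallProducts_eq_sum_indicator]
  exact Finset.measurable_fun_sum _ fun n _ =>
    measurable_one.indicator (measurableSet_mul_prod_nid_lt n δ)

lemma lintegral_card_smallProducts (N : ℕ) (δ : ℝ) (μ : Measure (ι → ℝ)) :
    ∫⁻ α, #(smallProducts N δ α) ∂μ =
      ∑ n ∈ Icc 1 N, μ {α | n * ∏ i, nid (n * α i) < δ} := by
  simp_rw [card_smallProducts_eq_sum_indicator]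
  rw [lintegral_finsetSum _ fun n _ =>
    measurable_one.indicator (measurableSet_mul_prod_nid_lt n δ)]
  simp_rw [lintegral_indicator_one (measurableSet_mul_prod_nid_lt _ δ)]

lemma sum_Icc_inv_le_one_add_log (N : ℕ) : ∑ n ∈ Icc 1 N, (n : ℝ)⁻¹ ≤ 1 + Real.log N := by
  simpa [harmonic_eq_sum_Icc] using harmonic_le_one_add_log N

lemma lintegral_cube_card_smallProducts_le (k N : ℕ) {δ L : ℝ} (hδ : 0 ≤ δ) (hL : 1 ≤ L)
    (hδN : Real.exp (-L) ≤ δ / N) :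
    ∫⁻ α in Set.Icc (0 : Fin (k + 1) → ℝ) 1, #(smallProducts N δ α) ≤
      ENNReal.ofReal (2 * Real.exp 1 * δ * (2 * L) ^ k * (1 + Real.log N)) := by
  have hterm : ∀ n ∈ Icc 1 N,
      volume.restrict (Set.Icc 0 1) {α : Fin (k + 1) → ℝ | n * ∏ i, nid (n * α i) < δ} ≤
        ENNReal.ofReal (2 * Real.exp 1 * δ * (2 * L) ^ k * (n : ℝ)⁻¹) := fun n hn => by
    obtain ⟨hn1, hnN⟩ := mem_Icc.1 hn
    have hn0 : (0 : ℝ) < n := by exact_mod_cast hn1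
    have hδn : Real.exp (-L) ≤ δ / n := hδN.trans (by gcongr)
    simp_rw [← lt_div_iff₀' hn0]
    refine (volume_cube_prod_nid_lt_le k (Nat.ne_of_gt hn1) hL hδn).trans_eq ?_
    congr 1
    ring
  rw [lintegral_card_smallProducts]
  calc _ ≤ ∑ n ∈ Icc 1 N, ENNReal.ofReal (2 * Real.exp 1 * δ * (2 * L) ^ k * (n : ℝ)⁻¹) :=
        sum_le_sum hterm
    _ = ENNReal.ofReal (2 * Real.exp 1 * δ * (2 * L) ^ k * ∑ n ∈ Icc 1 N, (n : ℝ)⁻¹) := by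
        rw [mul_sum, ENNReal.ofReal_sum_of_nonneg fun n _ => by positivity]
    _ ≤ _ := by
        gcongr
        exact sum_Icc_inv_le_one_add_log N

lemma exp_neg_le_div_of_le_exp (k : ℕ) {N : ℕ} (hN : 1 ≤ N) {A E w : ℝ} (hA : 1 ≤ A) (hE : 0 < E)
    (hw : 0 < w) (hwE : w ≤ E) (hNE : N ≤ Real.exp (3 * E)) :
    Real.exp (-((k + 5) * E)) ≤ A / (E ^ (k + 1) * w) / N := by
  have : (0 : ℝ) < N := by exact_mod_cast hN
  have hEexp : E ≤ Real.exp E := by linarith [Real.add_one_le_exp E]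
  have hden : E ^ (k + 1) * w * N ≤ Real.exp ((k + 5) * E) :=
    calc E ^ (k + 1) * w * N ≤ Real.exp E ^ (k + 1) * Real.exp E * Real.exp (3 * E) := by
          gcongr
          exact hwE.trans hEexp
      _ = Real.exp ((k + 5) * E) := by
          rw [← Real.exp_nat_mul, ← Real.exp_add, ← Real.exp_add]
          push_cast
          ring_nf
  rw [div_div, Real.exp_neg, ← one_div]
  gcongr

lemma lintegral_cube_card_smallProducts_div_le (k : ℕ) {N : ℕ} (hN : 1 ≤ N) {A E w : ℝ}
    (hA : 1 ≤ A) (hE : 1 ≤ E) (hw : 0 < w) (hwE : w ≤ E) (hNE : N ≤ Real.exp (3 * E)) :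
    ∫⁻ α in Set.Icc (0 : Fin (k + 1) → ℝ) 1, #(smallProducts N (A / (E ^ (k + 1) * w)) α) ≤
      ENNReal.ofReal (8 * Real.exp 1 * (2 * (k + 5)) ^ k * A / w) := by
  have hE0 : 0 < E := by linarith
  have hN0 : (0 : ℝ) < N := by exact_mod_cast hN
  have hlog : 1 + Real.log N ≤ 4 * E := by
    linarith [(Real.log_le_iff_le_exp hN0).2 hNE]
  have hL : 1 ≤ ((k : ℝ) + 5) * E :=
    one_le_mul_of_one_le_of_one_le (by linarith [k.cast_nonneg (α := ℝ)]) hE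
  refine (lintegral_cube_card_smallProducts_le k N (by positivity) hL
    (exp_neg_le_div_of_le_exp k hN hA hE0 hw hwE hNE)).trans (ENNReal.ofReal_le_ofReal ?_)
  calc _ ≤ 2 * Real.exp 1 * (A / (E ^ (k + 1) * w)) * (2 * ((k + 5) * E)) ^ k * (4 * E) := by
        gcongr
    _ = 8 * Real.exp 1 * (2 * (k + 5)) ^ k * A / w := by
        rw [← mul_assoc 2 _ E, mul_pow _ E]
        field_simp
        ring

end Counting

lemma ae_exists_card_smallProducts_le (k : ℕ) {w φ : ℕ → ℝ} (hwpos : ∀ q, 0 < w q)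
    (hwexp : ∀ q : ℕ, w q ≤ Real.exp q) (hwsum : Summable fun q => 1 / w q)
    (hφpos : ∀ n, 0 < φ n) (hφsum : Summable fun n => 1 / φ n) :
    ∀ᵐ α ∂(volume.restrict (Set.Icc (0 : Fin (k + 1) → ℝ) 1)), ∃ C : ℝ, ∀ q v : ℕ,
      (#(smallProducts ⌊Real.exp (Real.exp (q + 1))⌋₊
        (2 ^ v / (Real.exp q ^ (k + 1) * w q)) α) : ℝ) ≤ C * 2 ^ v * φ v := by
  have hsum : Summable fun z : ℕ × ℕ =>
      8 * Real.exp 1 * (2 * (k + 5)) ^ k * (1 / w z.1 * (1 / φ z.2)) :=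
    (hwsum.mul_of_nonneg hφsum (fun q => (one_div_pos.2 (hwpos q)).le)
      fun v => (one_div_pos.2 (hφpos v)).le).mul_left _
  have hmean : ∀ z : ℕ × ℕ, ∫⁻ α in Set.Icc (0 : Fin (k + 1) → ℝ) 1,
      #(smallProducts ⌊Real.exp (Real.exp (z.1 + 1))⌋₊
        (2 ^ z.2 / (Real.exp z.1 ^ (k + 1) * w z.1)) α) ≤
      ENNReal.ofReal (2 ^ z.2 * φ z.2 *
        (8 * Real.exp 1 * (2 * (k + 5)) ^ k * (1 / w z.1 * (1 / φ z.2)))) := by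
    rintro ⟨q, v⟩
    have hblock : (⌊Real.exp (Real.exp (q + 1))⌋₊ : ℝ) ≤ Real.exp (3 * Real.exp q) := by
      refine (Nat.floor_le (Real.exp_pos _).le).trans (Real.exp_le_exp.2 ?_)
      rw [Real.exp_add, mul_comm]
      gcongr
      linarith [Real.exp_one_lt_d9]
    refine (lintegral_cube_card_smallProducts_div_le k
      ((Nat.one_le_floor_iff _).2 (Real.one_le_exp (Real.exp_pos _).le))
      (one_le_pow₀ one_le_two) (Real.one_le_exp q.cast_nonneg) (hwpos q) (hwexp q)
      hblock).trans_eq ?_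
    have := (hφpos v).ne'
    congr 1
    field_simp
  filter_upwards [ae_exists_forall_le_ofReal_mul
    (fun z => (measurable_card_smallProducts _ _).aemeasurable)
    (fun z : ℕ × ℕ => mul_pos (pow_pos two_pos z.2) (hφpos z.2)) hsum hmean] with α ⟨C, hC⟩
  refine ⟨max C 0, fun q v => ?_⟩
  have hφv := hφpos v
  rw [mul_assoc, ← ENNReal.ofReal_le_ofReal_iff (by positivity), ENNReal.ofReal_natCast]
  exact (hC (q, v)).trans (ENNReal.ofReal_le_ofReal (by gcongr; exact le_max_left _ _))

lemma summable_one_div_min {ι : Type*} {f g : ι → ℝ} (hf : ∀ i, 0 < f i) (hg : ∀ i, 0 < g i)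
    (hfsum : Summable fun i => 1 / f i) (hgsum : Summable fun i => 1 / g i) :
    Summable fun i => 1 / min (f i) (g i) := by
  refine .of_nonneg_of_le (fun i => (one_div_pos.2 (lt_min (hf i) (hg i))).le) (fun i => ?_)
    (hfsum.add hgsum)
  have hfi := one_div_pos.2 (hf i)
  have hgi := one_div_pos.2 (hg i)
  rcases min_choice (f i) (g i) with h | h <;> rw [h] <;> linarith

/-- A lower bound, capped at `exp q`, for the weights `φ ⌈log (log n)⌉` occurring in the block
`exp (exp q) ≤ n < exp (exp (q + 1))`: there the ceiling is `q` or `q + 1`. -/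
def blockWeight (φ : ℕ → ℝ) (q : ℕ) : ℝ := min (min (φ q) (φ (q + 1))) (Real.exp q)

section BlockWeight

variable {φ : ℕ → ℝ}

lemma blockWeight_pos (hφpos : ∀ n, 0 < φ n) (q : ℕ) : 0 < blockWeight φ q :=
  lt_min (lt_min (hφpos q) (hφpos (q + 1))) (Real.exp_pos _)

lemma summable_one_div_blockWeight (hφpos : ∀ n, 0 < φ n)
    (hφsum : Summable fun n => 1 / φ n) : Summable fun q => 1 / blockWeight φ q := by
  refine summable_one_div_min (fun q => lt_min (hφpos q) (hφpos (q + 1)))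
    (fun q => Real.exp_pos _) ?_ ?_
  · exact summable_one_div_min hφpos (fun q => hφpos (q + 1)) hφsum
      ((summable_nat_add_iff 1).2 hφsum)
  · simpa only [one_div, ← Real.exp_neg] using Real.summable_exp_neg_nat

lemma blockWeight_le_apply_ceil {q : ℕ} {x : ℝ} (hlo : q ≤ x) (hhi : x ≤ q + 1) :
    blockWeight φ q ≤ φ ⌈x⌉₊ := by
  have hq : q ≤ ⌈x⌉₊ := by exact_mod_cast hlo.trans (Nat.le_ceil x)
  have hq1 : ⌈x⌉₊ ≤ q + 1 := Nat.ceil_le.2 (by exact_mod_cast hhi)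
  refine (min_le_left _ _).trans ?_
  obtain h | h : ⌈x⌉₊ = q ∨ ⌈x⌉₊ = q + 1 := by omega
  · exact h ▸ min_le_left _ _
  · exact h ▸ min_le_right _ _

lemma mem_smallProducts_of_mem_block {ι : Type*} [Fintype ι] {α : ι → ℝ} (hφpos : ∀ n, 0 < φ n)
    {d n q : ℕ} {A : ℝ} (hA : 0 ≤ A) (hlo : Real.exp (Real.exp q) ≤ n)
    (hhi : n ≤ Real.exp (Real.exp (q + 1)))
    (hlt : n * ∏ i, nid (n * α i) < A / (Real.log n ^ d * φ ⌈Real.log (Real.log n)⌉₊)) :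
    n ∈ smallProducts ⌊Real.exp (Real.exp (q + 1))⌋₊
      (A / (Real.exp q ^ d * blockWeight φ q)) α := by
  have hn : (0 : ℝ) < n := (Real.exp_pos _).trans_le hlo
  have hlog : Real.exp q ≤ Real.log n := (Real.le_log_iff_exp_le hn).2 hlo
  have hlog_pos : 0 < Real.log n := (Real.exp_pos _).trans_le hlog
  have hweight : blockWeight φ q ≤ φ ⌈Real.log (Real.log n)⌉₊ :=
    blockWeight_le_apply_ceil ((Real.le_log_iff_exp_le hlog_pos).2 hlog)
      ((Real.log_le_iff_le_exp hlog_pos).2 ((Real.log_le_iff_le_exp hn).2 hhi))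
  have hw := blockWeight_pos hφpos q
  rw [smallProducts, mem_filter, mem_Icc]
  refine ⟨⟨by exact_mod_cast hn, Nat.le_floor hhi⟩, hlt.trans_le ?_⟩
  gcongr

end BlockWeight

theorem stmt_13_general (d : ℕ) (hd : 1 ≤ d) (φ : ℕ → ℝ) (hφpos : ∀ n, 0 < φ n)
    (hφsum : Summable fun n => 1 / φ n) :
    ∀ᵐ α ∂((volume : Measure (Fin d → ℝ)).restrict
        (Set.univ.pi fun _ : Fin d => Set.Icc (0 : ℝ) 1)),
      ∃ C : ℝ, ∀ p v : ℕ, 1 ≤ p → 1 ≤ v →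
        (Set.ncard {n : ℕ |
            Real.exp (Real.exp ((p : ℝ) - 1)) ≤ (n : ℝ) ∧
            (n : ℝ) < Real.exp (Real.exp (p : ℝ)) ∧
            (2 : ℝ) ^ (v - 1) /
                (Real.log n ^ d * φ (Nat.ceil (Real.log (Real.log n)))) ≤
              (n : ℝ) * ∏ i : Fin d, nid ((n : ℝ) * α i) ∧
            (n : ℝ) * ∏ i : Fin d, nid ((n : ℝ) * α i) <
              (2 : ℝ) ^ v /
                (Real.log n ^ d * φ (Nat.ceil (Real.log (Real.log n))))} : ℝ) ≤
          C * 2 ^ v * φ v := by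
  obtain ⟨k, rfl⟩ := Nat.exists_eq_add_of_le' hd
  have hcube : (Set.univ.pi fun _ : Fin (k + 1) => Set.Icc (0 : ℝ) 1) = Set.Icc 0 1 :=
    Set.pi_univ_Icc 0 1
  rw [hcube]
  filter_upwards [ae_exists_card_smallProducts_le k (blockWeight_pos hφpos)
    (fun q => min_le_right _ _) (summable_one_div_blockWeight hφpos hφsum) hφpos hφsum]
    with α ⟨C, hC⟩
  refine ⟨C, fun p v hp _ => ?_⟩
  obtain ⟨q, rfl⟩ := Nat.exists_eq_add_of_le' hp
  refine le_trans ?_ (hC q v)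
  rw [Nat.cast_le, ← Set.ncard_coe_finset]
  refine Set.ncard_le_ncard ?_ (Finset.finite_toSet _)
  rintro n ⟨hlo, hhi, -, hlt⟩
  push_cast at hlo hhi
  rw [add_sub_cancel_right] at hlo
  exact mem_smallProducts_of_mem_block hφpos (by positivity) hlo hhi.le hlt

/-- For a.e. `α ∈ [0,1]^d` there is `C(α,φ)` such that for all `p ≥ 1`, `v ≥ 1`,
`#S_α(p,v) ≤ C·2^v·φ(v)`, where `S_α(p,v)` collects the `n` with
`e^{e^{p−1}} ≤ n < e^{e^p}` and
`2^{v−1}/((log n)^d·φ(⌈log log n⌉)) ≤ n·∏‖nα_i‖ < 2^v/((log n)^d·φ(⌈log log n⌉))`. -/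
theorem stmt_13 (d : ℕ) (hd : 1 ≤ d) (φ : ℕ → ℝ) (hφpos : ∀ n, 0 < φ n)
    (hφmono : Monotone φ) (hφsum : Summable fun n => 1 / φ n) :
    ∀ᵐ α ∂((volume : Measure (Fin d → ℝ)).restrict
        (Set.univ.pi fun _ : Fin d => Set.Icc (0 : ℝ) 1)),
      ∃ C : ℝ, ∀ p v : ℕ, 1 ≤ p → 1 ≤ v →
        (Set.ncard {n : ℕ |
            Real.exp (Real.exp ((p : ℝ) - 1)) ≤ (n : ℝ) ∧
            (n : ℝ) < Real.exp (Real.exp (p : ℝ)) ∧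
            (2 : ℝ) ^ (v - 1) /
                (Real.log n ^ d * φ (Nat.ceil (Real.log (Real.log n)))) ≤
              (n : ℝ) * ∏ i : Fin d, nid ((n : ℝ) * α i) ∧
            (n : ℝ) * ∏ i : Fin d, nid ((n : ℝ) * α i) <
              (2 : ℝ) ^ v /
                (Real.log n ^ d * φ (Nat.ceil (Real.log (Real.log n))))} : ℝ) ≤
          C * 2 ^ v * φ v :=
  stmt_13_general d hd φ hφpos hφsum
end
end
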